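/- Under the adapted pure-frontal setup with focal data, assume κ_t(0) ≠ 0 and that 0 is a first order V_j-ridge point of f, i.e. (V_jκ_j)(0) = 0 and (V_jV_jκ_j)(0) ≠ 0 (so 0 is a non-degenerate singular point of the first kind of the focal surface C_j, and (ρ_j)_v(0) = 0). Then C_j has a cuspidal cross cap at 0 (its germ at 0 is A-equivalent to (u,v) ↦ (u,v²,uv³) at 0, where A-equivalence of map germs means composing with diffeomorphism germs of source and target) if and only if, with all invariants and their u-derivatives evaluated at u = 0 and indices taken mod 2: r_c'(0) ≠ 0 and (ρ_j)_u(0)·(κ_t²·κ_ν' + 2κ_t·κ_t'·(κ_j−κ_ν) + (r_b'/3)·(κ_j−κ_ν)²) ≠ (κ_t² + (κ_j−κ_ν)²)·(κ_{j+1}−κ_j)·(κ_ν−κ_j). (Here (ρ_j)_u(0) equals the derivative ρ̂_j'(0) of ρ_j along the singular curve of C_j, since (ρ_j)_v(0) = 0.) -/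

import Mathlib

open Filter

noncomputable section

/-- Vectors in ℝ³, modeled as `Fin 3 → ℝ`. -/
abbrev R3 : Type := Fin 3 → ℝ

/-- The Euclidean inner product on ℝ³. -/
def dot3 (a b : R3) : ℝ := a 0 * b 0 + a 1 * b 1 + a 2 * b 2

/-- The Euclidean norm on ℝ³. -/
def norm3 (a : R3) : ℝ := Real.sqrt (dot3 a a)

/-- Partial derivative in the `u`-direction. -/
def pu {E : Type*} [NormedAddCommGroup E] [NormedSpace ℝ E] (F : ℝ × ℝ → E) (p : ℝ × ℝ) : E :=
  fderiv ℝ F p (1, 0)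

/-- Partial derivative in the `v`-direction. -/
def pv {E : Type*} [NormedAddCommGroup E] [NormedSpace ℝ E] (F : ℝ × ℝ → E) (p : ℝ × ℝ) : E :=
  fderiv ℝ F p (0, 1)

/-- The adapted pure-frontal setup: `f` is a frontal with unit normal `ν`,
`f_v = v·h`, `ν_v = v·ν₁`, the frame `{f_u, h, ν}` is linearly independent everywhere
and orthonormal along the `u`-axis. -/
structure AdaptedPureFrontal (f ν h ν₁ : ℝ × ℝ → R3) : Prop where
  smooth_f : ContDiff ℝ (⊤ : ℕ∞) f
  smooth_ν : ContDiff ℝ (⊤ : ℕ∞) ν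
  smooth_h : ContDiff ℝ (⊤ : ℕ∞) h
  smooth_ν₁ : ContDiff ℝ (⊤ : ℕ∞) ν₁
  unit_ν : ∀ p, dot3 (ν p) (ν p) = 1
  orth_fu_ν : ∀ p, dot3 (pu f p) (ν p) = 0
  orth_fv_ν : ∀ p, dot3 (pv f p) (ν p) = 0
  fv_eq : ∀ p : ℝ × ℝ, pv f p = p.2 • h p
  νv_eq : ∀ p : ℝ × ℝ, pv ν p = p.2 • ν₁ p
  indep : ∀ p, LinearIndependent ℝ ![pu f p, h p, ν p]
  adapted_fu : ∀ u : ℝ, dot3 (pu f (u, 0)) (pu f (u, 0)) = 1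
  adapted_h : ∀ u : ℝ, dot3 (h (u, 0)) (h (u, 0)) = 1
  adapted_fu_h : ∀ u : ℝ, dot3 (pu f (u, 0)) (h (u, 0)) = 0
  adapted_h_ν : ∀ u : ℝ, dot3 (h (u, 0)) (ν (u, 0)) = 0

/-- Ẽ = ⟨f_u, f_u⟩. -/
def Et (f : ℝ × ℝ → R3) (p : ℝ × ℝ) : ℝ := dot3 (pu f p) (pu f p)

/-- F̃ = ⟨f_u, h⟩. -/
def Ft (f h : ℝ × ℝ → R3) (p : ℝ × ℝ) : ℝ := dot3 (pu f p) (h p)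

/-- G̃ = ⟨h, h⟩. -/
def Gt (h : ℝ × ℝ → R3) (p : ℝ × ℝ) : ℝ := dot3 (h p) (h p)

/-- L̃ = −⟨f_u, ν_u⟩. -/
def Lt (f ν : ℝ × ℝ → R3) (p : ℝ × ℝ) : ℝ := -dot3 (pu f p) (pu ν p)

/-- M̃ = −⟨h, ν_u⟩. -/
def Mt (h ν : ℝ × ℝ → R3) (p : ℝ × ℝ) : ℝ := -dot3 (h p) (pu ν p)

/-- Ñ₁ = −⟨h, ν₁⟩. -/
def Nt1 (h ν₁ : ℝ × ℝ → R3) (p : ℝ × ℝ) : ℝ := -dot3 (h p) (ν₁ p)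

/-- The Gaussian curvature K = (L̃Ñ₁ − M̃²)/(ẼG̃ − F̃²). -/
def Kg (f ν h ν₁ : ℝ × ℝ → R3) (p : ℝ × ℝ) : ℝ :=
  (Lt f ν p * Nt1 h ν₁ p - Mt h ν p ^ 2) / (Et f p * Gt h p - Ft f h p ^ 2)

/-- The mean curvature H = (ẼÑ₁ − 2F̃M̃ + G̃L̃)/(2(ẼG̃ − F̃²)). -/
def Hm (f ν h ν₁ : ℝ × ℝ → R3) (p : ℝ × ℝ) : ℝ :=
  (Et f p * Nt1 h ν₁ p - 2 * Ft f h p * Mt h ν p + Gt h p * Lt f ν p) /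
    (2 * (Et f p * Gt h p - Ft f h p ^ 2))

/-- The principal curvature κ = H + ε√(H² − K); `ε = 1` gives κ₁ and `ε = -1` gives κ₂. -/
def kap (f ν h ν₁ : ℝ × ℝ → R3) (ε : ℝ) (p : ℝ × ℝ) : ℝ :=
  Hm f ν h ν₁ p + ε * Real.sqrt (Hm f ν h ν₁ p ^ 2 - Kg f ν h ν₁ p)

/-- First component of the principal vector field V = −v(M̃ − κF̃)∂_u + (L̃ − κẼ)∂_v. -/
def V1c (f ν h ν₁ : ℝ × ℝ → R3) (ε : ℝ) (p : ℝ × ℝ) : ℝ :=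
  -(p.2 * (Mt h ν p - kap f ν h ν₁ ε p * Ft f h p))

/-- Second component of the principal vector field V = −v(M̃ − κF̃)∂_u + (L̃ − κẼ)∂_v. -/
def V2c (f ν h ν₁ : ℝ × ℝ → R3) (ε : ℝ) (p : ℝ × ℝ) : ℝ :=
  Lt f ν p - kap f ν h ν₁ ε p * Et f p

/-- Directional derivative of `g` along the principal vector field V. -/
def VD (f ν h ν₁ : ℝ × ℝ → R3) (ε : ℝ) {E : Type*} [NormedAddCommGroup E] [NormedSpace ℝ E]
    (g : ℝ × ℝ → E) (p : ℝ × ℝ) : E :=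
  V1c f ν h ν₁ ε p • pu g p + V2c f ν h ν₁ ε p • pv g p

/-- The radius of principal curvature ρ = 1/κ. -/
def rho (f ν h ν₁ : ℝ × ℝ → R3) (ε : ℝ) (p : ℝ × ℝ) : ℝ := (kap f ν h ν₁ ε p)⁻¹

/-- The focal surface C = f + ρ·ν. -/
def Cf (f ν h ν₁ : ℝ × ℝ → R3) (ε : ℝ) (p : ℝ × ℝ) : R3 :=
  f p + rho f ν h ν₁ ε p • ν p

/-- The normal direction x = −(M̃ − κF̃)·f_u + (L̃ − κẼ)·h of the focal surface. -/
def xj (f ν h ν₁ : ℝ × ℝ → R3) (ε : ℝ) (p : ℝ × ℝ) : R3 :=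
  (-(Mt h ν p - kap f ν h ν₁ ε p * Ft f h p)) • pu f p +
    (Lt f ν p - kap f ν h ν₁ ε p * Et f p) • h p

/-- The unit normal e = x/‖x‖ of the focal surface. -/
def ej (f ν h ν₁ : ℝ × ℝ → R3) (ε : ℝ) (p : ℝ × ℝ) : R3 :=
  (norm3 (xj f ν h ν₁ ε p))⁻¹ • xj f ν h ν₁ ε p

/-- The limiting normal curvature κ_ν(u) = L̃(u,0). -/
def kν (f ν : ℝ × ℝ → R3) (u : ℝ) : ℝ := Lt f ν (u, 0)

/-- The cuspidal torsion κ_t(u) = M̃(u,0). -/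
def kt (h ν : ℝ × ℝ → R3) (u : ℝ) : ℝ := Mt h ν (u, 0)

/-- The bias r_b(u) = 3Ñ₁(u,0). -/
def rb (h ν₁ : ℝ × ℝ → R3) (u : ℝ) : ℝ := 3 * Nt1 h ν₁ (u, 0)

/-- The secondary cuspidal curvature r_c(u) = 24((Ñ₁)_v − 2F̃_vM̃ − G̃_vÑ₁)(u,0). -/
def rc (f ν h ν₁ : ℝ × ℝ → R3) (u : ℝ) : ℝ :=
  24 * (pv (Nt1 h ν₁) (u, 0) - 2 * pv (Ft f h) (u, 0) * Mt h ν (u, 0) -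
    pv (Gt h) (u, 0) * Nt1 h ν₁ (u, 0))

/-- The singular curvature κ_s(u) = ⟨f_uu, h⟩(u,0). -/
def ks (f h : ℝ × ℝ → R3) (u : ℝ) : ℝ := dot3 (pu (pu f) (u, 0)) (h (u, 0))

/-- The rank of the differential of `F` at `p`. -/
def rankAt (F : ℝ × ℝ → R3) (p : ℝ × ℝ) : ℕ :=
  Module.finrank ℝ (LinearMap.range (fderiv ℝ F p).toLinearMap)

/-- A map `φ` is a local diffeomorphism at `p` if it is C^∞ at `p` and admits a
local C^∞ inverse near `p`. -/
def IsLocalDiffeoAt {E F : Type*} [NormedAddCommGroup E] [NormedSpace ℝ E]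
    [NormedAddCommGroup F] [NormedSpace ℝ F] (φ : E → F) (p : E) : Prop :=
  ContDiffAt ℝ (⊤ : ℕ∞) φ p ∧ ∃ ψ : F → E, ContDiffAt ℝ (⊤ : ℕ∞) ψ (φ p) ∧
    (∀ᶠ x in nhds p, ψ (φ x) = x) ∧ (∀ᶠ y in nhds (φ p), φ (ψ y) = y)

/-- 𝒜-equivalence of map germs: the germ of `f` at `p` is 𝒜-equivalent to the germ of
`g` at `q` if `f` is carried to `g` by composing with diffeomorphism germs of the
source and the target. -/
def AEquivAt (f : ℝ × ℝ → R3) (p : ℝ × ℝ) (g : ℝ × ℝ → R3) (q : ℝ × ℝ) : Prop :=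
  ∃ (φ : ℝ × ℝ → ℝ × ℝ) (Φ : R3 → R3),
    IsLocalDiffeoAt φ q ∧ φ q = p ∧ IsLocalDiffeoAt Φ (f p) ∧
    ∀ᶠ x in nhds q, Φ (f (φ x)) = g x

/-!
Let `V` be the principal field and `C = f + ρ ν` the focal surface. Since `dC(V) = (V ρ) ν`, the
surface `C` is singular along `{V ρ = 0}` with kernel `V`, and at a first order ridge point this set
is a curve transverse to `V`. Take `(ℓ ∘ C, V ρ)` as coordinates, where `ℓ` is a linear form with
`ℓ(ν(0)) = 0 ≠ ℓ(C_u(0))`: then the derivative of `C` in the second coordinate is divisible by that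
coordinate, and Whitney's theorem on even functions brings the germ to the form
`(u, v², v³ b(u, v²))`, which is the cuspidal cross cap iff `b(0) = 0 ≠ b_u(0)`.

The normal covector `x` of `C` satisfies `⟨dx(V), ν⟩ = v κ ⟨x, x⟩`. Hence along the singular curve
`b` is a nonvanishing multiple of the `v`-coordinate of that curve, so `b(0) = 0` automatically, and
`b_u(0) ≠ 0` iff the curve is not tangent to the `u`-axis, i.e. iff `(V ρ)_u(0) ≠ 0`, i.e. iff
`r_c'(0) ≠ 0`. The inequality involving `(ρ_j)_u(0)` holds wherever `κ_t ≠ 0`: equality would make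
a sum of squares vanish.
-/

open Topology MeasureTheory Set
open scoped ContDiff SchwartzMap

section ParametricIntegral

variable {E W G : Type*} [NormedAddCommGroup E] [NormedSpace ℝ E]
  [NormedAddCommGroup W] [NormedSpace ℝ W]
  [NormedAddCommGroup G] [NormedSpace ℝ G]

theorem contDiff_integral_of_dominated {α : Type*} [MeasurableSpace α] {μ : Measure α}
    {Φ : E → α → G} (hΦ : ∀ a, ContDiff ℝ ∞ (Φ · a))
    (hmeas : ∀ (n : ℕ) x, AEStronglyMeasurable (fun a => iteratedFDeriv ℝ n (Φ · a) x) μ)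
    (hbound : ∀ (n : ℕ) x₀, ∃ s ∈ 𝓝 x₀, ∃ g : α → ℝ, Integrable g μ ∧
      ∀ᵐ a ∂μ, ∀ x ∈ s, ‖iteratedFDeriv ℝ n (Φ · a) x‖ ≤ g a) :
    ContDiff ℝ ∞ fun x => ∫ a, Φ x a ∂μ := by
  have hderiv (n : ℕ) (x : E) :
      HasFDerivAt (fun x => ∫ a, iteratedFDeriv ℝ n (Φ · a) x ∂μ)
        (∫ a, iteratedFDeriv ℝ (n + 1) (Φ · a) x ∂μ).curryLeft x := by
    obtain ⟨s₀, hs₀, g₀, hg₀, hb₀⟩ := hbound n x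
    obtain ⟨s, hs, g, hg, hb⟩ := hbound (n + 1) x
    let curry : (E [×n + 1]→L[ℝ] G) ≃L[ℝ] E →L[ℝ] E [×n]→L[ℝ] G :=
      (continuousMultilinearCurryLeftEquiv ℝ (fun _ => E) G).toContinuousLinearEquiv
    have hcurry : ∫ a, curry (iteratedFDeriv ℝ (n + 1) (Φ · a) x) ∂μ =
        curry (∫ a, iteratedFDeriv ℝ (n + 1) (Φ · a) x ∂μ) :=
      ContinuousLinearEquiv.integral_comp_comm (𝕜 := ℝ) (E := E [×n + 1]→L[ℝ] G)
        (F := E →L[ℝ] E [×n]→L[ℝ] G) curry _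
    change HasFDerivAt _ (curry (∫ a, iteratedFDeriv ℝ (n + 1) (Φ · a) x ∂μ)) x
    rw [← hcurry]
    refine hasFDerivAt_integral_of_dominated_of_fderiv_le (bound := g) hs
      (.of_forall fun x => hmeas n x)
      (hg₀.mono' (hmeas n x) (hb₀.mono fun a ha => ha x (mem_of_mem_nhds hs₀)))
      (curry.continuous.comp_aestronglyMeasurable (hmeas (n + 1) x))
      (hb.mono fun a ha x hx =>
        ((continuousMultilinearCurryLeftEquiv ℝ (fun _ : Fin (n + 1) => E) G).norm_map _).trans_le
          (ha x hx)) hg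
      (.of_forall fun a x _ => ?_)
    have hdiff : Differentiable ℝ (iteratedFDeriv ℝ n (Φ · a)) :=
      (hΦ a).differentiable_iteratedFDeriv (mod_cast WithTop.coe_lt_top _)
    exact (hdiff x).hasFDerivAt
  refine HasFTaylorSeriesUpTo.contDiff (n := ⊤)
    (f' := fun x n => ∫ a, iteratedFDeriv ℝ n (Φ · a) x ∂μ) ⟨fun x => ?_, fun n _ x => hderiv n x,
      fun n _ => continuous_iff_continuousAt.2 fun x => (hderiv n x).continuousAt⟩
  exact (ContinuousLinearEquiv.integral_comp_comm (𝕜 := ℝ)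
    (continuousMultilinearCurryFin0 ℝ E G).toContinuousLinearEquiv
    fun a => iteratedFDeriv ℝ 0 (Φ · a) x).symm

theorem iteratedFDeriv_comp_prodMk_left {Φ : E × W → G} {n : ℕ} (hΦ : ContDiff ℝ n Φ) (x : E)
    (w : W) : iteratedFDeriv ℝ n (fun x => Φ (x, w)) x =
      (iteratedFDeriv ℝ n Φ (x, w)).compContinuousLinearMap
        fun _ => ContinuousLinearMap.inl ℝ E W := by
  have htranslate : ContDiff ℝ n fun z => Φ (z + (0, w)) := by fun_prop
  have hinl := (ContinuousLinearMap.inl ℝ E W).iteratedFDeriv_comp_right htranslate x le_rfl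
  rw [iteratedFDeriv_comp_add_right] at hinl
  simpa [Function.comp_def] using hinl

theorem norm_iteratedFDeriv_comp_prodMk_left_le {Φ : E × W → G} {n : ℕ} (hΦ : ContDiff ℝ n Φ)
    (x : E) (w : W) :
    ‖iteratedFDeriv ℝ n (fun x => Φ (x, w)) x‖ ≤ ‖iteratedFDeriv ℝ n Φ (x, w)‖ := by
  rw [iteratedFDeriv_comp_prodMk_left hΦ]
  refine (ContinuousMultilinearMap.norm_compContinuousLinearMap_le _ _).trans ?_
  refine mul_le_of_le_one_right (norm_nonneg _) (Finset.prod_le_one (fun _ _ => norm_nonneg _) ?_)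
  exact fun _ _ => ContinuousLinearMap.norm_inl_le_one ℝ E W

theorem continuous_iteratedFDeriv_comp_prodMk_left {Φ : E × W → G} {n : ℕ}
    (hΦ : ContDiff ℝ n Φ) (x : E) :
    Continuous fun w => iteratedFDeriv ℝ n (fun x => Φ (x, w)) x := by
  simp only [iteratedFDeriv_comp_prodMk_left hΦ]
  exact (ContinuousMultilinearMap.compContinuousLinearMapL
    fun _ => ContinuousLinearMap.inl ℝ E W).continuous.comp
      ((hΦ.continuous_iteratedFDeriv le_rfl).comp (by fun_prop))

theorem contDiff_intervalIntegral [LocallyCompactSpace E] {Φ : E × ℝ → G}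
    (hΦ : ContDiff ℝ ∞ Φ) (a b : ℝ) : ContDiff ℝ ∞ fun x => ∫ t in a..b, Φ (x, t) := by
  have hΦn (n : ℕ) : ContDiff ℝ n Φ := hΦ.of_le (mod_cast le_top)
  simp only [intervalIntegral.intervalIntegral_eq_integral_uIoc]
  refine contDiff_const.smul (contDiff_integral_of_dominated (fun t => by fun_prop)
    (fun n x => (continuous_iteratedFDeriv_comp_prodMk_left (hΦn n) x).aestronglyMeasurable)
    fun n x₀ => ?_)
  obtain ⟨s, hs, hx₀⟩ := exists_compact_mem_nhds x₀
  obtain ⟨M, hM⟩ := (hs.prod (isCompact_uIcc (a := a) (b := b))).exists_bound_of_continuousOn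
    ((hΦn n).continuous_iteratedFDeriv le_rfl).continuousOn
  refine ⟨s, hx₀, fun _ => M, (integrableOn_const_iff).2 (.inr (by simp [uIoc])), ?_⟩
  filter_upwards [ae_restrict_mem measurableSet_uIoc] with t ht x hx
  exact (norm_iteratedFDeriv_comp_prodMk_left_le (hΦn n) x t).trans
    (hM (x, t) ⟨hx, uIoc_subset_uIcc ht⟩)

theorem contDiff_integral_schwartz_smul [MeasurableSpace W]
    [BorelSpace W] [SecondCountableTopology W] [NormedSpace ℂ G] {Φ : E × W → G}
    (hΦ : Φ.HasTemperateGrowth) (ψ : 𝓢(W, ℂ)) (μ : Measure W) [μ.HasTemperateGrowth] :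
    ContDiff ℝ ∞ fun x => ∫ w, ψ w • Φ (x, w) ∂μ := by
  have hΦn (n : ℕ) : ContDiff ℝ n Φ := hΦ.1.of_le (mod_cast le_top)
  have hsmul (n : ℕ) (x : E) (w : W) : iteratedFDeriv ℝ n (fun x => ψ w • Φ (x, w)) x =
      ψ w • iteratedFDeriv ℝ n (fun x => Φ (x, w)) x :=
    iteratedFDeriv_const_smul_apply' ((hΦn n).comp (contDiff_prodMk_left w)).contDiffAt
  refine contDiff_integral_of_dominated (fun w => ?_) (fun n x => ?_) fun n x₀ => ?_
  · exact (hΦ.1.comp (contDiff_prodMk_left w)).const_smul (ψ w)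
  · simp only [hsmul]
    exact (ψ.continuous.smul
      (continuous_iteratedFDeriv_comp_prodMk_left (hΦn n) x)).aestronglyMeasurable
  obtain ⟨k, C, hC⟩ := hΦ.2 n
  refine ⟨Metric.ball x₀ 1, Metric.ball_mem_nhds x₀ one_pos,
    fun w => C * (2 + ‖x₀‖) ^ k * ((1 + ‖w‖) ^ k * ‖ψ w‖), ?_, .of_forall fun w x hx => ?_⟩
  · refine Integrable.const_mul ?_ _
    simp only [add_pow, Finset.sum_mul]
    refine integrable_finsetSum _ fun i _ => ?_
    refine ((ψ.integrable_pow_mul μ (k - i)).const_mul (k.choose i : ℝ)).congr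
      (.of_forall fun w => ?_)
    simp only [one_pow, one_mul]
    ring
  have hx' : 1 + ‖(x, w)‖ ≤ (2 + ‖x₀‖) * (1 + ‖w‖) := by
    have : ‖x‖ ≤ 1 + ‖x₀‖ := by
      have := norm_le_norm_add_norm_sub' x x₀
      linarith [mem_ball_iff_norm.1 hx]
    rw [Prod.norm_mk]
    rcases max_cases ‖x‖ ‖w‖ with h | h <;>
      nlinarith [norm_nonneg x₀, norm_nonneg w, mul_nonneg (norm_nonneg x₀) (norm_nonneg w)]
  have hC₀ : 0 ≤ C := by simpa using (norm_nonneg _).trans (hC 0)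
  calc ‖iteratedFDeriv ℝ n (fun x => ψ w • Φ (x, w)) x‖
      ≤ ‖ψ w‖ * (C * (1 + ‖(x, w)‖) ^ k) := by
        rw [hsmul, norm_smul]
        gcongr
        exact (norm_iteratedFDeriv_comp_prodMk_left_le (hΦn n) x w).trans (hC _)
    _ ≤ ‖ψ w‖ * (C * ((2 + ‖x₀‖) * (1 + ‖w‖)) ^ k) := by gcongr
    _ = C * (2 + ‖x₀‖) ^ k * ((1 + ‖w‖) ^ k * ‖ψ w‖) := by rw [mul_pow]; ring

end ParametricIntegral

section PartialDerivatives

theorem isSymmSndFDerivAt_of_contDiff {E F : Type*} [NormedAddCommGroup E] [NormedSpace ℝ E]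
    [NormedAddCommGroup F] [NormedSpace ℝ F] {f : E → F} (hf : ContDiff ℝ ∞ f) (p : E) :
    IsSymmSndFDerivAt ℝ f p :=
  hf.contDiffAt.isSymmSndFDerivAt <| by
    rw [minSmoothness_of_isRCLikeNormedField]
    exact ENat.LEInfty.out

variable {E : Type*} [NormedAddCommGroup E] [NormedSpace ℝ E]

theorem fderiv_apply_eq_pu_add_pv (F : ℝ × ℝ → E) (p w : ℝ × ℝ) :
    fderiv ℝ F p w = w.1 • pu F p + w.2 • pv F p := by
  conv_lhs => rw [show w = w.1 • ((1 : ℝ), (0 : ℝ)) + w.2 • ((0 : ℝ), (1 : ℝ)) by simp]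
  rw [map_add, map_smul, map_smul]
  rfl

theorem contDiff_pu {F : ℝ × ℝ → E} (hF : ContDiff ℝ ∞ F) : ContDiff ℝ ∞ (pu F) :=
  (contDiff_infty_iff_fderiv.1 hF).2.clm_apply contDiff_const

theorem contDiff_pv {F : ℝ × ℝ → E} (hF : ContDiff ℝ ∞ F) : ContDiff ℝ ∞ (pv F) :=
  (contDiff_infty_iff_fderiv.1 hF).2.clm_apply contDiff_const

theorem hasDerivAt_axis {F : ℝ × ℝ → E} {u : ℝ} (hF : DifferentiableAt ℝ F (u, 0)) :
    HasDerivAt (fun t => F (t, 0)) (pu F (u, 0)) u :=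
  HasFDerivAt.comp_hasDerivAt (l := F) u hF.hasFDerivAt
    ((hasDerivAt_id u).prodMk (hasDerivAt_const u 0))

theorem fderiv_apply_of_fst_eq_zero (F : ℝ × ℝ → E) (p : ℝ × ℝ) {w : ℝ × ℝ} (hw : w.1 = 0) :
    fderiv ℝ F p w = w.2 • pv F p := by
  rw [fderiv_apply_eq_pu_add_pv, hw, zero_smul, zero_add]

theorem pv_eq_of_eventuallyEq_snd_smul {F Q : ℝ × ℝ → E} {p : ℝ × ℝ} (hp : p.2 = 0)
    (hF : DifferentiableAt ℝ F p) (hQ : ContinuousAt Q p)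
    (hFQ : ∀ᶠ y in 𝓝 p, F y = y.2 • Q y) : pv F p = Q p := by
  have hline : HasDerivAt (fun t : ℝ => (p.1, t)) (0, 1) 0 :=
    (hasDerivAt_const 0 p.1).prodMk (hasDerivAt_id 0)
  have hp0 : (p.1, (0 : ℝ)) = p := Prod.ext rfl hp.symm
  have hcurve : Tendsto (fun t : ℝ => (p.1, t)) (𝓝 0) (𝓝 p) :=
    hp0 ▸ hline.continuousAt.tendsto
  have hd : HasDerivAt (fun t => F (p.1, t)) (pv F p) 0 :=
    HasFDerivAt.comp_hasDerivAt (l := F) 0 (hp0.symm ▸ hF.hasFDerivAt) hline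
  have hFp : F p = 0 := by rw [hFQ.self_of_nhds, hp, zero_smul]
  refine tendsto_nhds_unique (hasDerivAt_iff_tendsto_slope_zero.1 hd)
    (((hQ.tendsto.comp hcurve).mono_left nhdsWithin_le_nhds).congr' ?_)
  filter_upwards [(hcurve.eventually hFQ).filter_mono nhdsWithin_le_nhds,
    self_mem_nhdsWithin] with t ht ht₀
  rw [Function.comp_apply, zero_add, hp0, hFp, sub_zero, ht, smul_smul, inv_mul_cancel₀ ht₀,
    one_smul]

theorem eq_of_snd_smul_eq {A B : ℝ × ℝ → E} (hA : Continuous A) (hB : Continuous B)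
    (hAB : ∀ p : ℝ × ℝ, p.2 • A p = p.2 • B p) : A = B :=
  Continuous.ext_on ((dense_compl_singleton (0 : ℝ)).preimage isOpenMap_snd) hA hB
    fun p hp => smul_right_injective E hp (hAB p)

theorem pv_pu_comm {F : ℝ × ℝ → E} (hF : ContDiff ℝ ∞ F) (p : ℝ × ℝ) :
    pv (pu F) p = pu (pv F) p := by
  have hF' : DifferentiableAt ℝ (fderiv ℝ F) p :=
    (hF.fderiv_right (m := ∞) le_rfl).differentiable (by simp) p
  change fderiv ℝ (fun q => fderiv ℝ F q (1, 0)) p (0, 1) =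
    fderiv ℝ (fun q => fderiv ℝ F q (0, 1)) p (1, 0)
  simpa [fderiv_clm_apply hF' (differentiableAt_const _)]
    using isSymmSndFDerivAt_of_contDiff hF p (0, 1) (1, 0)

theorem pv_pu_of_pv_eq_snd_smul {F Q : ℝ × ℝ → E} (hF : ContDiff ℝ ∞ F) (hQ : ContDiff ℝ ∞ Q)
    (hFQ : ∀ p, pv F p = p.2 • Q p) (p : ℝ × ℝ) : pv (pu F) p = p.2 • pu Q p := by
  rw [pv_pu_comm hF, funext hFQ, pu,
    fderiv_fun_smul differentiableAt_snd (hQ.differentiable (by simp) p)]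
  simp [pu, fderiv_snd]

end PartialDerivatives

section LocalSmoothFunctions

variable {E G : Type*} [NormedAddCommGroup E] [NormedSpace ℝ E] [NormedAddCommGroup G]
  [NormedSpace ℝ G]

theorem exists_hadamard_quotient [LocallyCompactSpace E] [CompleteSpace G] {F : E × ℝ → G}
    (hF : ContDiff ℝ ∞ F) :
    ∃ Q : E × ℝ → G, ContDiff ℝ ∞ Q ∧ (∀ x t, F (x, t) = F (x, 0) + t • Q (x, t)) ∧
      ∀ x, Q (x, 0) = fderiv ℝ F (x, 0) (0, 1) := by
  have hF' : ContDiff ℝ ∞ fun q => fderiv ℝ F q (0, 1) :=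
    (contDiff_infty_iff_fderiv.1 hF).2.clm_apply contDiff_const
  refine ⟨fun q => ∫ s in (0 : ℝ)..1, fderiv ℝ F (q.1, s * q.2) (0, 1),
    contDiff_intervalIntegral (Φ := fun y : (E × ℝ) × ℝ => fderiv ℝ F (y.1.1, y.2 * y.1.2) (0, 1))
      (hF'.comp (by fun_prop : ContDiff ℝ ∞ fun y : (E × ℝ) × ℝ => (y.1.1, y.2 * y.1.2))) 0 1,
    fun x t => ?_, fun x => by simp⟩
  have hderiv (s : ℝ) :
      HasDerivAt (fun s => F (x, s * t)) (t • fderiv ℝ F (x, s * t) (0, 1)) s := by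
    have hpath : HasDerivAt (fun s => (x, s * t)) ((0 : E), t) s :=
      (hasDerivAt_const s x).prodMk (by simpa using (hasDerivAt_id s).mul_const t)
    have hchain := (hF.differentiable (by simp) (x, s * t)).hasFDerivAt.comp_hasDerivAt s hpath
    have ht : ((0 : E), t) = t • ((0 : E), (1 : ℝ)) := by simp
    rwa [ht, map_smul] at hchain
  have hcont : Continuous fun s => t • fderiv ℝ F (x, s * t) (0, 1) :=
    (hF'.continuous.comp (by fun_prop : Continuous fun s => (x, s * t))).const_smul t
  rw [← intervalIntegral.integral_smul, intervalIntegral.integral_eq_sub_of_hasDerivAt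
    (fun s _ => hderiv s) (hcont.intervalIntegrable 0 1)]
  simp

theorem exists_hadamard_quotient_sq [LocallyCompactSpace E] [CompleteSpace G] {F : E × ℝ → G}
    (hF : ContDiff ℝ ∞ F) :
    ∃ Q : E × ℝ → G, ContDiff ℝ ∞ Q ∧
      ∀ x t, F (x, t) = F (x, 0) + t • fderiv ℝ F (x, 0) (0, 1) + t ^ 2 • Q (x, t) := by
  obtain ⟨P, hP, hFP, hP₀⟩ := exists_hadamard_quotient hF
  obtain ⟨Q, hQ, hPQ, -⟩ := exists_hadamard_quotient hP
  refine ⟨Q, hQ, fun x t => ?_⟩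
  rw [hFP, hPQ, hP₀]
  module

theorem exists_contDiff_hasCompactSupport_eventuallyEq [FiniteDimensional ℝ E] {f : E → G} {p : E}
    (hf : ∀ᶠ q in 𝓝 p, ContDiffAt ℝ ∞ f q) :
    ∃ g : E → G, ContDiff ℝ ∞ g ∧ HasCompactSupport g ∧ g =ᶠ[𝓝 p] f := by
  obtain ⟨r, hr, hball⟩ := Metric.nhds_basis_closedBall.mem_iff.1 hf
  let χ : ContDiffBump p := ⟨r / 2, r, half_pos hr, half_lt_self hr⟩
  refine ⟨fun q => χ q • f q, contDiff_iff_contDiffAt.2 fun q => ?_,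
    χ.hasCompactSupport.smul_right, ?_⟩
  · by_cases hq : q ∈ tsupport χ
    · exact χ.contDiffAt.smul (hball (χ.tsupport_eq ▸ hq))
    · refine (contDiffAt_const (c := (0 : G))).congr_of_eventuallyEq ?_
      filter_upwards [notMem_tsupport_iff_eventuallyEq.1 hq] with y hy
      simp [hy]
  · filter_upwards [χ.eventuallyEq_one] with q hq
    simp [hq]

end LocalSmoothFunctions

section CosineOfSquareRoot

theorem exists_differentiable_comp_sq_eq_cos :
    ∃ c : ℂ → ℂ, Differentiable ℂ c ∧ ∀ w, c (w ^ 2) = Complex.cos w := by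
  let p := FormalMultilinearSeries.ofScalars ℂ
    fun n : ℕ => (-1 : ℂ) ^ n / ((2 * n).factorial : ℂ)
  have hp : p.radius = ⊤ := p.radius_eq_top_of_summable_norm fun r => by
    refine (Real.hasSum_cosh √r).summable.congr fun n => ?_
    rw [FormalMultilinearSeries.ofScalars_norm, pow_mul, Real.sq_sqrt r.coe_nonneg]
    simp only [norm_div, norm_pow, norm_neg, norm_one, one_pow, RCLike.norm_natCast]
    ring
  have hsum := p.hasFPowerSeriesOnBall (by simp [hp])
  refine ⟨p.sum, fun z => (hsum.analyticOnNhd z (by simp [hp])).differentiableAt, fun w => ?_⟩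
  rw [← (Complex.hasSum_cos w).tsum_eq]
  refine tsum_congr fun n => ?_
  rw [FormalMultilinearSeries.ofScalars_apply_eq, smul_eq_mul, ← pow_mul]
  ring

theorem norm_cos_le_exp_abs_im (w : ℂ) : ‖Complex.cos w‖ ≤ Real.exp |w.im| := by
  have hexp (z : ℂ) (hz : z.re ≤ |w.im|) : ‖Complex.exp z‖ ≤ Real.exp |w.im| := by
    rw [Complex.norm_exp]
    exact Real.exp_le_exp.2 hz
  have hpos := hexp (w * Complex.I) (by simpa using neg_le_abs w.im)
  have hneg := hexp (-w * Complex.I) (by simpa using le_abs_self w.im)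
  rw [Complex.cos, norm_div, Complex.norm_two, div_le_iff₀ two_pos]
  linarith [norm_add_le (Complex.exp (w * Complex.I)) (Complex.exp (-w * Complex.I))]

theorem norm_le_exp_one_of_comp_sq_eq_cos {c : ℂ → ℂ} (hcos : ∀ w, c (w ^ 2) = Complex.cos w)
    {s : ℝ} (hs : 0 ≤ s) {z : ℂ} (hz : ‖z - s‖ ≤ 1) : ‖c z‖ ≤ Real.exp 1 := by
  obtain ⟨w, rfl⟩ : ∃ w : ℂ, z = w ^ 2 :=
    ⟨z ^ (1 / 2 : ℂ), by rw [← Complex.cpow_nat_mul]; simp⟩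
  have hre : (w ^ 2).re = w.re ^ 2 - w.im ^ 2 := by simp [pow_two]
  have hnorm : ‖w ^ 2‖ = w.re ^ 2 + w.im ^ 2 := by
    rw [norm_pow, ← Complex.normSq_eq_norm_sq, Complex.normSq_apply]
    ring
  have hre_ge : s - 1 ≤ (w ^ 2).re := by
    have := (abs_le.1 ((Complex.abs_re_le_norm _).trans hz)).1
    rw [Complex.sub_re, Complex.ofReal_re] at this
    linarith
  have hnorm_le : ‖w ^ 2‖ ≤ s + 1 := by
    have := norm_le_norm_add_norm_sub' (w ^ 2) (s : ℂ)
    rw [Complex.norm_real, Real.norm_of_nonneg hs] at this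
    linarith
  rw [hcos]
  refine (norm_cos_le_exp_abs_im w).trans (Real.exp_le_exp.2 (abs_le_of_sq_le_sq ?_ one_pos.le))
  linarith

theorem iteratedDeriv_re_ofReal {c : ℂ → ℂ} (hc : Differentiable ℂ c) (n : ℕ) :
    iteratedDeriv n (fun s : ℝ => (c s).re) = fun s : ℝ => (iteratedDeriv n c s).re := by
  induction n with
  | zero => simp
  | succ n ih =>
    ext s
    rw [iteratedDeriv_succ, ih, iteratedDeriv_succ]
    have hdiff : Differentiable ℂ (iteratedDeriv n c) :=
      (hc.contDiff (n := ∞)).differentiable_iteratedDeriv n (mod_cast WithTop.coe_lt_top _)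
    exact (hdiff s).hasDerivAt.real_of_complex.deriv

theorem hasTemperateGrowth_of_iteratedDeriv_bounded {c : ℝ → ℝ} (hc : ContDiff ℝ ∞ c)
    (hbound : ∀ n, ∃ M, ∀ s, |iteratedDeriv n c s| ≤ M) : c.HasTemperateGrowth :=
  ⟨hc, fun n => (hbound n).imp' (fun _ => 0) fun M hM => ⟨M, fun s => by
    simpa [norm_iteratedFDeriv_eq_norm_iteratedDeriv] using hM s⟩⟩

theorem exists_hasTemperateGrowth_eqOn_Ici {c : ℝ → ℝ} (hc : ContDiff ℝ ∞ c)
    (hbound : ∀ n, ∃ M, ∀ s, 0 ≤ s → |iteratedDeriv n c s| ≤ M) :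
    ∃ d : ℝ → ℝ, d.HasTemperateGrowth ∧ EqOn d c (Ici 0) := by
  let d : ℝ → ℝ := fun s => Real.smoothTransition (s + 1) * c s
  have hd : ContDiff ℝ ∞ d :=
    (Real.smoothTransition.contDiff.comp (contDiff_id.add contDiff_const)).mul hc
  have hdc : EqOn d c (Ici 0) := fun s (hs : 0 ≤ s) => by
    simp only [d]
    rw [Real.smoothTransition.one_of_one_le (by linarith), one_mul]
  refine ⟨d, hasTemperateGrowth_of_iteratedDeriv_bounded hd fun n => ?_, hdc⟩
  obtain ⟨M, hM⟩ := hbound n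
  obtain ⟨M', hM'⟩ := (isCompact_Icc (a := (-1 : ℝ)) (b := 0)).exists_bound_of_continuousOn
    (hd.continuous_iteratedDeriv n (mod_cast le_top)).continuousOn
  refine ⟨max 0 (max M M'), fun s => ?_⟩
  rcases lt_or_ge 0 s with hs | hs
  · have heq : d =ᶠ[𝓝 s] c := (eventually_gt_nhds hs).mono fun t ht => hdc ht.le
    rw [heq.iteratedDeriv_eq]
    exact (hM s hs.le).trans ((le_max_left _ _).trans (le_max_right _ _))
  rcases lt_or_ge s (-1) with hs' | hs'
  · have hzero : d =ᶠ[𝓝 s] fun _ => 0 := (eventually_lt_nhds hs').mono fun t ht => by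
      simp only [d]
      rw [Real.smoothTransition.zero_of_nonpos (by linarith), zero_mul]
    rw [hzero.iteratedDeriv_eq]
    simp
  · exact (hM' s ⟨hs', hs⟩).trans ((le_max_right _ _).trans (le_max_right _ _))

theorem exists_hasTemperateGrowth_comp_sq_eq_cos :
    ∃ c : ℝ → ℝ, c.HasTemperateGrowth ∧ ∀ v, c (v ^ 2) = Real.cos v := by
  obtain ⟨c, hc, hcos⟩ := exists_differentiable_comp_sq_eq_cos
  have hsmooth : ContDiff ℝ ∞ fun s : ℝ => (c s).re :=
    Complex.reCLM.contDiff.comp ((hc.contDiff.restrict_scalars ℝ).comp Complex.ofRealCLM.contDiff)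
  have hbound (n : ℕ) : ∃ M, ∀ s : ℝ, 0 ≤ s → |iteratedDeriv n (fun s : ℝ => (c s).re) s| ≤ M := by
    refine ⟨n.factorial * Real.exp 1 / 1 ^ n, fun s hs => ?_⟩
    rw [iteratedDeriv_re_ofReal hc]
    exact (Complex.abs_re_le_norm _).trans
      (Complex.norm_iteratedDeriv_le_of_forall_mem_sphere_norm_le n one_pos hc.diffContOnCl
        fun z hz => norm_le_exp_one_of_comp_sq_eq_cos hcos hs (mem_sphere_iff_norm.1 hz).le)
  obtain ⟨d, hd, hdc⟩ := exists_hasTemperateGrowth_eqOn_Ici hsmooth hbound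
  refine ⟨d, hd, fun v => ?_⟩
  rw [hdc (sq_nonneg v)]
  simp only [Complex.ofReal_pow, hcos, Complex.cos_ofReal_re]

end CosineOfSquareRoot

section WhitneyEven

theorem hasTemperateGrowth_cexp_ofReal_mul_I :
    Function.HasTemperateGrowth fun t : ℝ => Complex.exp (t * Complex.I) := by
  have hcos : Real.cos.HasTemperateGrowth :=
    hasTemperateGrowth_of_iteratedDeriv_bounded Real.contDiff_cos
      fun n => ⟨1, Real.abs_iteratedDeriv_cos_le_one n⟩
  have hsin : Real.sin.HasTemperateGrowth :=
    hasTemperateGrowth_of_iteratedDeriv_bounded Real.contDiff_sin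
      fun n => ⟨1, Real.abs_iteratedDeriv_sin_le_one n⟩
  simp only [Complex.exp_mul_I, ← Complex.ofReal_cos, ← Complex.ofReal_sin]
  fun_prop

variable {E : Type*} [NormedAddCommGroup E] [InnerProductSpace ℝ E]

theorem exists_schwartz_fourier_eventuallyEq [FiniteDimensional ℝ E] [MeasurableSpace E]
    [BorelSpace E] {f : E → ℂ} (hf : ContDiff ℝ ∞ f) : ∃ ψ : 𝓢(E, ℂ), ∀ᶠ x in 𝓝 0,
      f x = ∫ w, ψ w * Complex.exp ((2 * Real.pi * inner ℝ w x : ℝ) * Complex.I) := by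
  obtain ⟨φ, hφ, hφc, hφf⟩ := exists_contDiff_hasCompactSupport_eventuallyEq
    (p := (0 : E)) (.of_forall fun x => hf.contDiffAt)
  let Φ : 𝓢(E, ℂ) := hφc.toSchwartzMap hφ
  refine ⟨FourierTransform.fourier Φ, hφf.mono fun x hx => ?_⟩
  have hinv : FourierTransformInv.fourierInv (FourierTransform.fourier Φ) x = φ x :=
    congrArg (· x) (FourierTransform.fourierInv_fourier_eq Φ)
  rw [← hx, ← hinv, SchwartzMap.fourierInv_coe, Real.fourierInv_eq']
  refine integral_congr_ae (.of_forall fun w => ?_)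
  simp only [smul_eq_mul]
  ring

theorem integrable_schwartz_mul_cexp [FiniteDimensional ℝ E] [MeasurableSpace E] [BorelSpace E]
    (ψ : 𝓢(E, ℂ)) (x : E) :
    Integrable fun w => ψ w * Complex.exp ((2 * Real.pi * inner ℝ w x : ℝ) * Complex.I) := by
  refine (ψ.integrable (μ := volume)).norm.mono'
    (by fun_prop : Continuous _).aestronglyMeasurable (.of_forall fun w => ?_)
  rw [norm_mul, Complex.norm_exp_ofReal_mul_I, mul_one]

theorem cexp_add_mul_I_add_cexp_sub_mul_I (a b : ℝ) :
    Complex.exp ((a + b : ℝ) * Complex.I) + Complex.exp ((a - b : ℝ) * Complex.I) =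
      2 * (Complex.exp (a * Complex.I) * (Real.cos b : ℂ)) := by
  rw [Complex.ofReal_cos, Complex.cos, Complex.ofReal_add, Complex.ofReal_sub, add_mul, sub_mul,
    Complex.exp_add, sub_eq_add_neg, Complex.exp_add, neg_mul]
  ring

theorem cexp_inner_toLp_add_cexp_inner_toLp_neg (w : WithLp 2 (E × ℝ)) (x : E) (v : ℝ) :
    Complex.exp ((2 * Real.pi * inner ℝ w (.toLp 2 (x, v)) : ℝ) * Complex.I) +
      Complex.exp ((2 * Real.pi * inner ℝ w (.toLp 2 (x, -v)) : ℝ) * Complex.I) =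
    2 * (Complex.exp ((2 * Real.pi * inner ℝ w.fst x : ℝ) * Complex.I) *
      (Real.cos (2 * Real.pi * w.snd * v) : ℂ)) := by
  rw [← cexp_add_mul_I_add_cexp_sub_mul_I]
  simp only [WithLp.prod_inner_apply, RCLike.inner_apply, conj_trivial, WithLp.ofLp_fst,
    WithLp.ofLp_snd]
  congr 4 <;> ring

theorem hasTemperateGrowth_cexp_inner_mul_comp {c : ℝ → ℝ} (hc : c.HasTemperateGrowth) :
    Function.HasTemperateGrowth fun y : (E × ℝ) × WithLp 2 (E × ℝ) =>
      Complex.exp ((2 * Real.pi * inner ℝ y.2.fst y.1.1 : ℝ) * Complex.I) *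
        (c (y.1.2 * (2 * Real.pi * y.2.snd) ^ 2) : ℂ) := by
  let Y := (E × ℝ) × WithLp 2 (E × ℝ)
  have hp : Function.HasTemperateGrowth (Prod.fst : Y → E × ℝ) :=
    (ContinuousLinearMap.fst ℝ (E × ℝ) (WithLp 2 (E × ℝ))).hasTemperateGrowth
  have hw : Function.HasTemperateGrowth fun y : Y => (y.2.fst, y.2.snd) :=
    ((WithLp.prodContinuousLinearEquiv 2 ℝ E ℝ : WithLp 2 (E × ℝ) →L[ℝ] E × ℝ).comp
      (ContinuousLinearMap.snd ℝ (E × ℝ) (WithLp 2 (E × ℝ)))).hasTemperateGrowth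
  have hfst := (ContinuousLinearMap.fst ℝ E ℝ).hasTemperateGrowth
  have hsnd := (ContinuousLinearMap.snd ℝ E ℝ).hasTemperateGrowth
  have hinner : Function.HasTemperateGrowth fun y : Y => inner ℝ y.2.fst y.1.1 :=
    (innerSL ℝ).bilinear_hasTemperateGrowth (hfst.comp hw) (hfst.comp hp)
  have ht : Function.HasTemperateGrowth fun y : Y => y.1.2 := hsnd.comp hp
  have hv : Function.HasTemperateGrowth fun y : Y => y.2.snd := hsnd.comp hw
  have hphase : Function.HasTemperateGrowth fun y : Y => 2 * Real.pi * inner ℝ y.2.fst y.1.1 := by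
    fun_prop
  have hsq : Function.HasTemperateGrowth fun y : Y => y.1.2 * (2 * Real.pi * y.2.snd) ^ 2 := by
    simp only [pow_two]
    fun_prop
  exact (hasTemperateGrowth_cexp_ofReal_mul_I.comp hphase).mul
    (Complex.ofRealCLM.hasTemperateGrowth.comp (hc.comp hsq))

/-- By Fourier inversion `f` is a superposition of waves `exp(i(⟨ξ, x⟩ + ηv))`, and the even part in
`v` of such a wave is `exp(i⟨ξ, x⟩) cos(ηv)`, a smooth function of `x` and `v²`. -/
theorem exists_contDiff_add_neg_eq_two_mul_sq [FiniteDimensional ℝ E] {f : E × ℝ → ℝ}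
    (hf : ContDiff ℝ ∞ f) :
    ∃ g : E × ℝ → ℝ, ContDiff ℝ ∞ g ∧
      ∀ᶠ p in 𝓝 (0 : E × ℝ), f (p.1, p.2) + f (p.1, -p.2) = 2 * g (p.1, p.2 ^ 2) := by
  borelize E
  obtain ⟨c, hc, hcos⟩ := exists_hasTemperateGrowth_comp_sq_eq_cos
  have hfW : ContDiff ℝ ∞ fun q : WithLp 2 (E × ℝ) => (f (q.fst, q.snd) : ℂ) :=
    Complex.ofRealCLM.contDiff.comp (hf.comp (WithLp.prodContinuousLinearEquiv 2 ℝ E ℝ).contDiff)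
  obtain ⟨ψ, hψ⟩ := exists_schwartz_fourier_eventuallyEq hfW
  let m : (E × ℝ) × WithLp 2 (E × ℝ) → ℂ := fun y =>
    Complex.exp ((2 * Real.pi * inner ℝ y.2.fst y.1.1 : ℝ) * Complex.I) *
      (c (y.1.2 * (2 * Real.pi * y.2.snd) ^ 2) : ℂ)
  have hg : ContDiff ℝ ∞ fun p : E × ℝ => ∫ w, ψ w • m (p, w) :=
    contDiff_integral_schwartz_smul (hasTemperateGrowth_cexp_inner_mul_comp hc) ψ volume
  refine ⟨fun p => (∫ w, ψ w • m (p, w)).re, Complex.reCLM.contDiff.comp hg, ?_⟩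
  have heq (x : E) (v : ℝ) (w : WithLp 2 (E × ℝ)) :
      ψ w * Complex.exp ((2 * Real.pi * inner ℝ w (.toLp 2 (x, v)) : ℝ) * Complex.I) +
        ψ w * Complex.exp ((2 * Real.pi * inner ℝ w (.toLp 2 (x, -v)) : ℝ) * Complex.I) =
      2 * (ψ w • m ((x, v ^ 2), w)) := by
    rw [← mul_add, cexp_inner_toLp_add_cexp_inner_toLp_neg, ← hcos, mul_pow _ v,
      mul_comm _ (v ^ 2), smul_eq_mul, mul_left_comm]
  have htendsto (ε : ℝ) :
      Tendsto (fun p : E × ℝ => WithLp.toLp 2 (p.1, ε * p.2)) (𝓝 0) (𝓝 0) := by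
    refine Continuous.tendsto' ((WithLp.prodContinuousLinearEquiv 2 ℝ E ℝ).symm.continuous.comp
      (by fun_prop : Continuous fun p : E × ℝ => (p.1, ε * p.2))) _ _ ?_
    simp
  filter_upwards [(htendsto 1).eventually hψ, (htendsto (-1)).eventually hψ] with p hp hp'
  have hadd := integral_add (integrable_schwartz_mul_cexp ψ (.toLp 2 (p.1, p.2)))
    (integrable_schwartz_mul_cexp ψ (.toLp 2 (p.1, -p.2)))
  simp only [one_mul, neg_mul] at hp hp'
  simp only [heq, ← hp, ← hp', integral_const_mul] at hadd
  simpa using (congrArg Complex.re hadd).symm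

end WhitneyEven

section LocalDiffeomorphisms

variable {E F G : Type*} [NormedAddCommGroup E] [NormedSpace ℝ E] [NormedAddCommGroup F]
  [NormedSpace ℝ F] [NormedAddCommGroup G] [NormedSpace ℝ G]

theorem IsLocalDiffeoAt.comp {g : F → G} {f : E → F} {p : E} (hg : IsLocalDiffeoAt g (f p))
    (hf : IsLocalDiffeoAt f p) : IsLocalDiffeoAt (g ∘ f) p := by
  obtain ⟨hg₁, g', hg'₁, hg'g, hgg'⟩ := hg
  obtain ⟨hf₁, f', hf'₁, hf'f, hff'⟩ := hf
  have hgp : g' (g (f p)) = f p := hg'g.self_of_nhds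
  refine ⟨hg₁.comp p hf₁, f' ∘ g', ContDiffAt.comp _ (hgp.symm ▸ hf'₁) hg'₁, ?_, ?_⟩
  · filter_upwards [hf'f, hf₁.continuousAt.eventually hg'g] with x hx hx'
    rw [Function.comp_apply, Function.comp_apply, hx', hx]
  · have hg'c : Tendsto g' (𝓝 (g (f p))) (𝓝 (f p)) := by
      simpa only [hgp] using hg'₁.continuousAt.tendsto
    filter_upwards [hgg', hg'c.eventually hff'] with y hy hy'
    rw [Function.comp_apply, Function.comp_apply, hy', hy]

theorem isLocalDiffeoAt_of_inverse {f : E → F} {g : F → E} (hf : ContDiff ℝ ∞ f)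
    (hg : ContDiff ℝ ∞ g) (hgf : Function.LeftInverse g f) (hfg : Function.RightInverse g f)
    (p : E) : IsLocalDiffeoAt f p :=
  ⟨hf.contDiffAt, g, hg.contDiffAt, .of_forall hgf, .of_forall hfg⟩

variable {θ : E → E} {p : E}

theorem eventually_exists_hasFDerivAt_equiv [CompleteSpace E]
    (hθ : ∀ᶠ x in 𝓝 p, ContDiffAt ℝ ∞ θ x) {e : E ≃L[ℝ] E}
    (he : HasFDerivAt θ (e : E →L[ℝ] E) p) :
    ∀ᶠ x in 𝓝 p, ∃ e' : E ≃L[ℝ] E, HasFDerivAt θ (e' : E →L[ℝ] E) x := by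
  have hcont : ContinuousAt (fderiv ℝ θ) p :=
    (hθ.self_of_nhds.fderiv_right (m := 0) (by simp)).continuousAt
  filter_upwards [hθ, hcont (he.fderiv ▸ ContinuousLinearEquiv.nhds e)] with x hx ⟨e', he'⟩
  exact ⟨e', he' ▸ (hx.differentiableAt (by simp)).hasFDerivAt⟩

variable [FiniteDimensional ℝ E]

theorem exists_hasFDerivAt_equiv_of_injective (hθ : DifferentiableAt ℝ θ p)
    (hinj : ∀ x, fderiv ℝ θ p x = 0 → x = 0) :
    ∃ e : E ≃L[ℝ] E, HasFDerivAt θ (e : E →L[ℝ] E) p := by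
  have hker : Function.Injective (fderiv ℝ θ p).toLinearMap :=
    LinearMap.ker_eq_bot.1 (LinearMap.ker_eq_bot'.2 hinj)
  exact ⟨(LinearEquiv.ofInjectiveEndo _ hker).toContinuousLinearEquiv, hθ.hasFDerivAt⟩

theorem isLocalDiffeoAt_of_injective_fderiv (hθ : ContDiffAt ℝ ∞ θ p)
    (hinj : ∀ x, fderiv ℝ θ p x = 0 → x = 0) : IsLocalDiffeoAt θ p := by
  have : CompleteSpace E := FiniteDimensional.complete ℝ E
  obtain ⟨e, he⟩ := exists_hasFDerivAt_equiv_of_injective (hθ.differentiableAt (by simp)) hinj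
  refine ⟨hθ, hθ.localInverse he (by simp), hθ.to_localInverse he (by simp), ?_, ?_⟩
  · exact (hθ.hasStrictFDerivAt' he (by simp)).eventually_left_inverse
  · exact (hθ.hasStrictFDerivAt' he (by simp)).eventually_right_inverse

theorem exists_contDiff_rightInverse (hθ : ∀ᶠ x in 𝓝 p, ContDiffAt ℝ ∞ θ x)
    (hinj : ∀ x, fderiv ℝ θ p x = 0 → x = 0) :
    ∃ ψ : E → E, ContDiff ℝ ∞ ψ ∧ ψ (θ p) = p ∧ IsLocalDiffeoAt ψ (θ p) ∧
      ∀ᶠ y in 𝓝 (θ p), θ (ψ y) = y := by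
  have : CompleteSpace E := FiniteDimensional.complete ℝ E
  have hp := hθ.self_of_nhds
  obtain ⟨e, he⟩ := exists_hasFDerivAt_equiv_of_injective (hp.differentiableAt (by simp)) hinj
  have hs := hp.hasStrictFDerivAt' he (by simp)
  have hsmooth : ∀ᶠ x in 𝓝 p, ContDiffAt ℝ ∞ (hs.localInverse θ e p) (θ x) := by
    filter_upwards [hθ, eventually_exists_hasFDerivAt_equiv hθ he,
      hs.eventually_left_inverse.eventually_nhds] with x hx ⟨e', he'⟩ hinv
    exact (hx.to_localInverse he' (by simp)).congr_of_eventuallyEq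
      ((hx.hasStrictFDerivAt' he' (by simp)).localInverse_unique hinv)
  have hsmooth' : ∀ᶠ y in 𝓝 (θ p), ContDiffAt ℝ ∞ (hs.localInverse θ e p) y := by
    filter_upwards [hs.localInverse_tendsto.eventually hsmooth, hs.eventually_right_inverse]
      with y hy hinv
    rwa [hinv] at hy
  obtain ⟨ψ, hψ, -, hψe⟩ := exists_contDiff_hasCompactSupport_eventuallyEq hsmooth'
  have hψp : ψ (θ p) = p := hψe.self_of_nhds.trans hs.localInverse_apply_image
  have hleft : ∀ᶠ x in 𝓝 p, ψ (θ x) = x := by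
    filter_upwards [hp.continuousAt.eventually hψe, hs.eventually_left_inverse] with x hx hinv
    rw [hx, hinv]
  have hright : ∀ᶠ y in 𝓝 (θ p), θ (ψ y) = y := by
    filter_upwards [hψe, hs.eventually_right_inverse] with y hy hinv
    rw [hy, hinv]
  refine ⟨ψ, hψ, hψp, ⟨hψ.contDiffAt, θ, ?_, hright, ?_⟩, hright⟩
  · rwa [hψp]
  · rwa [hψp]

end LocalDiffeomorphisms

section AEquivalence

variable {f g k : ℝ × ℝ → R3} {p q r : ℝ × ℝ}

theorem AEquivAt.trans (hfg : AEquivAt f p g q) (hgk : AEquivAt g q k r) : AEquivAt f p k r := by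
  obtain ⟨φ, Φ, hφ, rfl, hΦ, hfg⟩ := hfg
  obtain ⟨χ, X, hχ, rfl, hX, hgk⟩ := hgk
  refine ⟨φ ∘ χ, X ∘ Φ, hφ.comp hχ, rfl, ?_, ?_⟩
  · exact IsLocalDiffeoAt.comp (hfg.self_of_nhds ▸ hX) hΦ
  · filter_upwards [hχ.1.continuousAt.eventually hfg, hgk] with x hx hx'
    simp only [Function.comp_apply, hx, hx']

theorem isLocalDiffeoAt_id {E : Type*} [NormedAddCommGroup E] [NormedSpace ℝ E] (x : E) :
    IsLocalDiffeoAt id x :=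
  isLocalDiffeoAt_of_inverse contDiff_id contDiff_id (fun _ => rfl) (fun _ => rfl) x

theorem aequivAt_comp_source {φ : ℝ × ℝ → ℝ × ℝ} (hφ : IsLocalDiffeoAt φ q) (hp : φ q = p) :
    AEquivAt f p (f ∘ φ) q :=
  ⟨φ, id, hφ, hp, isLocalDiffeoAt_id _, .of_forall fun _ => rfl⟩

theorem aequivAt_of_comp_target_eventuallyEq {Φ : R3 → R3} (hΦ : IsLocalDiffeoAt Φ (f p))
    (h : ∀ᶠ x in 𝓝 p, Φ (f x) = g x) : AEquivAt f p g p :=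
  ⟨id, Φ, isLocalDiffeoAt_id _, rfl, hΦ, h⟩

theorem contDiff_vec3 {E : Type*} [NormedAddCommGroup E] [NormedSpace ℝ E] {a b c : E → ℝ}
    (ha : ContDiff ℝ ∞ a) (hb : ContDiff ℝ ∞ b) (hc : ContDiff ℝ ∞ c) :
    ContDiff ℝ ∞ fun x => (![a x, b x, c x] : R3) :=
  contDiff_pi.2 (Fin.forall_fin_succ.2 ⟨ha, Fin.forall_fin_two.2 ⟨hb, hc⟩⟩)

/-- The germ `(u, v², b(u, v²)v³)`, the normal form reached by every map whose differential has a
kernel transverse to a smooth singular curve and a second derivative along the kernel independent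
of the image of the differential. It is the standard cuspidal cross cap for `b = Prod.fst`. -/
def cuspidalGerm (b : ℝ × ℝ → ℝ) (x : ℝ × ℝ) : R3 := ![x.1, x.2 ^ 2, b (x.1, x.2 ^ 2) * x.2 ^ 3]

theorem contDiff_cuspidalGerm {b : ℝ × ℝ → ℝ} (hb : ContDiff ℝ ∞ b) :
    ContDiff ℝ ∞ (cuspidalGerm b) :=
  contDiff_vec3 contDiff_fst (by fun_prop) (by fun_prop)

theorem cuspidalGerm_zero (b : ℝ × ℝ → ℝ) : cuspidalGerm b 0 = 0 := by
  ext i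
  fin_cases i <;> simp [cuspidalGerm]

theorem exists_isLocalDiffeoAt_comp_sq_eq {b : ℝ × ℝ → ℝ} (hb : ContDiff ℝ ∞ b) (hb₀ : b 0 = 0)
    (hbu : pu b 0 ≠ 0) : ∃ ψ : ℝ × ℝ → ℝ × ℝ, IsLocalDiffeoAt ψ 0 ∧ ψ 0 = 0 ∧
      ∀ᶠ x in 𝓝 0, b ((ψ x).1, (ψ x).2 ^ 2) = x.1 ∧ (ψ x).2 = x.2 := by
  let θ : ℝ × ℝ → ℝ × ℝ := fun x => (b (x.1, x.2 ^ 2), x.2)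
  have hθ : ContDiff ℝ ∞ θ := by fun_prop
  have hsq : ((0 : ℝ × ℝ).1, (0 : ℝ × ℝ).2 ^ 2) = (0 : ℝ × ℝ) := by simp
  have hθ₀ : θ 0 = 0 := Prod.ext ((congrArg b hsq).trans hb₀) rfl
  have hbd := (hb.differentiable (by simp) 0).hasFDerivAt
  rw [← hsq] at hbd
  have hsnd := hasFDerivAt_snd (𝕜 := ℝ) (p := (0 : ℝ × ℝ))
  have hθd : HasFDerivAt θ _ 0 := (hbd.comp (0 : ℝ × ℝ)
    (hasFDerivAt_fst.prodMk (hsnd.pow 2))).prodMk hsnd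
  obtain ⟨ψ, -, hψ₀, hψ, hθψ⟩ := exists_contDiff_rightInverse (p := 0)
    (.of_forall fun x => hθ.contDiffAt) fun x hx => by
      rw [hθd.fderiv] at hx
      obtain ⟨hx₁, hx₂ : x.2 = 0⟩ := Prod.ext_iff.1 hx
      have hx₁ : x.1 = 0 := by
        simpa [fderiv_apply_eq_pu_add_pv, hbu, Prod.mk_zero_zero] using hx₁
      exact Prod.ext hx₁ hx₂
  rw [hθ₀] at hψ₀ hψ hθψ
  exact ⟨ψ, hψ, hψ₀, hθψ.mono fun x hx => Prod.ext_iff.1 hx⟩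

theorem isLocalDiffeoAt_vec3_of_pu_ne_zero {b : ℝ × ℝ → ℝ} (hb : ContDiff ℝ ∞ b)
    (hbu : pu b 0 ≠ 0) : IsLocalDiffeoAt (fun y : R3 => (![b (y 0, y 1), y 1, y 2] : R3)) 0 := by
  have hΦ := contDiff_vec3 (a := fun y : R3 => b (y 0, y 1)) (by fun_prop)
    (contDiff_apply ℝ ℝ 1) (contDiff_apply ℝ ℝ 2)
  have hbd : HasFDerivAt b (fderiv ℝ b 0) ((0 : R3) 0, (0 : R3) 1) :=
    (hb.differentiable (by simp) 0).hasFDerivAt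
  have hd : HasFDerivAt (fun y : R3 => (![b (y 0, y 1), y 1, y 2] : R3))
      (.pi ![fderiv ℝ b 0 ∘L (.prod (.proj 0) (.proj 1)), .proj 1, .proj 2]) 0 :=
    hasFDerivAt_pi.2 (Fin.forall_fin_succ.2 ⟨hbd.comp (0 : R3)
      (f := fun y : R3 => (y 0, y 1)) ((hasFDerivAt_apply 0 _).prodMk (hasFDerivAt_apply 1 _)),
      Fin.forall_fin_two.2 ⟨hasFDerivAt_apply 1 _, hasFDerivAt_apply 2 _⟩⟩)
  refine isLocalDiffeoAt_of_injective_fderiv hΦ.contDiffAt fun x hx => ?_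
  rw [hd.fderiv] at hx
  have hx₁ : x 1 = 0 := congrFun hx 1
  have hx₀ : x 0 = 0 := by
    simpa [fderiv_apply_eq_pu_add_pv, hx₁, hbu] using congrFun hx 0
  exact funext (Fin.forall_fin_succ.2 ⟨hx₀, Fin.forall_fin_two.2 ⟨hx₁, congrFun hx 2⟩⟩)

theorem aequivAt_cuspidalGerm_fst {b : ℝ × ℝ → ℝ} (hb : ContDiff ℝ ∞ b) (hb₀ : b 0 = 0)
    (hbu : pu b 0 ≠ 0) : AEquivAt (cuspidalGerm b) 0 (cuspidalGerm Prod.fst) 0 := by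
  obtain ⟨ψ, hψ, hψ₀, hψb⟩ := exists_isLocalDiffeoAt_comp_sq_eq hb hb₀ hbu
  refine (aequivAt_comp_source hψ hψ₀).trans (aequivAt_of_comp_target_eventuallyEq
    (Φ := fun y => ![b (y 0, y 1), y 1, y 2]) ?_ ?_)
  · rw [Function.comp_apply, hψ₀, cuspidalGerm_zero]
    exact isLocalDiffeoAt_vec3_of_pu_ne_zero hb hbu
  · filter_upwards [hψb] with x ⟨hx₁, hx₂⟩
    rw [hx₂] at hx₁
    ext i
    fin_cases i <;> simp [cuspidalGerm, hx₁, hx₂]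

end AEquivalence

section NormalForm

theorem exists_contDiff_eq_add_sq_smul {E : Type*} [NormedAddCommGroup E] [NormedSpace ℝ E]
    [CompleteSpace E] {D : ℝ × ℝ → E} (hD : ContDiff ℝ ∞ D)
    (hax : ∀ᶠ u in 𝓝 (0 : ℝ), pv D (u, 0) = 0) :
    ∃ Q : ℝ × ℝ → E, ContDiff ℝ ∞ Q ∧ pv (pv D) 0 = (2 : ℝ) • Q 0 ∧
      ∀ᶠ y in 𝓝 (0 : ℝ × ℝ), D y = D (y.1, 0) + y.2 ^ 2 • Q y := by
  obtain ⟨Q, hQ, hDQ⟩ := exists_hadamard_quotient_sq hD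
  have hev : ∀ᶠ y in 𝓝 (0 : ℝ × ℝ), D y = D (y.1, 0) + y.2 ^ 2 • Q y := by
    filter_upwards [(continuous_fst.tendsto (0 : ℝ × ℝ)).eventually hax] with y hy
    rw [pv] at hy
    simpa only [hy, smul_zero, add_zero] using hDQ y.1 y.2
  refine ⟨Q, hQ, ?_, hev⟩
  have hpvD : ∀ᶠ y in 𝓝 (0 : ℝ × ℝ), pv D y = y.2 • ((2 : ℝ) • Q y + y.2 • pv Q y) := by
    filter_upwards [hev.eventually_nhds] with y hy
    have hfst : HasFDerivAt (fun y : ℝ × ℝ => D (y.1, 0)) _ y :=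
      HasFDerivAt.comp (g := D) y (hD.differentiable (by simp) (y.1, 0)).hasFDerivAt
        (hasFDerivAt_fst.prodMk (hasFDerivAt_const (0 : ℝ) y))
    have hsum := hfst.add
      (((hasFDerivAt_snd (𝕜 := ℝ) (p := y)).pow 2).smul
        (hQ.differentiable (by simp) y).hasFDerivAt)
    rw [pv, (hsum.congr_of_eventuallyEq hy).fderiv]
    simp [pv, Prod.mk_zero_zero]
    module
  have hQc := hQ.continuous
  have hpvQ := (contDiff_pv hQ).continuous
  rw [pv_eq_of_eventuallyEq_snd_smul (p := 0) rfl ((contDiff_pv hD).differentiable (by simp) 0)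
    (by fun_prop) hpvD]
  simp

theorem exists_contDiff_eq_even_add_odd {E : Type*} [NormedAddCommGroup E]
    [InnerProductSpace ℝ E] [FiniteDimensional ℝ E] {g : E × ℝ → ℝ} (hg : ContDiff ℝ ∞ g) :
    ∃ e b : E × ℝ → ℝ, ContDiff ℝ ∞ e ∧ ContDiff ℝ ∞ b ∧
      ∀ᶠ z in 𝓝 0, g z = e (z.1, z.2 ^ 2) + z.2 * b (z.1, z.2 ^ 2) := by
  obtain ⟨e, he, hge⟩ := exists_contDiff_add_neg_eq_two_mul_sq hg
  obtain ⟨δ, hδ, hgδ, -⟩ := exists_hadamard_quotient hg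
  obtain ⟨b, hb, hδb⟩ := exists_contDiff_add_neg_eq_two_mul_sq hδ
  refine ⟨e, b, he, hb, ?_⟩
  filter_upwards [hge, hδb] with z hz hz'
  have hpos := hgδ z.1 z.2
  have hneg := hgδ z.1 (-z.2)
  simp only [Prod.mk.eta, smul_eq_mul] at hz hz' hpos hneg ⊢
  linear_combination (1 / 2 : ℝ) * hz + (z.2 / 2) * hz' + (1 / 2 : ℝ) * hpos -
    (1 / 2 : ℝ) * hneg

theorem exists_isLocalDiffeoAt_sq_mul_eq_sq {β : ℝ × ℝ → ℝ} (hβ : ContDiff ℝ ∞ β)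
    (hβ₀ : 0 < β 0) : ∃ ψ : ℝ × ℝ → ℝ × ℝ, ContDiff ℝ ∞ ψ ∧ IsLocalDiffeoAt ψ 0 ∧ ψ 0 = 0 ∧
      ∀ᶠ z in 𝓝 0, (ψ z).1 = z.1 ∧ (ψ z).2 ^ 2 * β (ψ z) = z.2 ^ 2 := by
  have hpos : ∀ᶠ y in 𝓝 0, 0 < β y := hβ.continuous.continuousAt.eventually_const_lt hβ₀
  let θ : ℝ × ℝ → ℝ × ℝ := fun y => (y.1, y.2 * Real.sqrt (β y))
  have hsqrt : ∀ᶠ y in 𝓝 0, ContDiffAt ℝ ∞ (fun y => Real.sqrt (β y)) y :=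
    hpos.mono fun y hy => hβ.contDiffAt.sqrt hy.ne'
  have hθ : ∀ᶠ y in 𝓝 0, ContDiffAt ℝ ∞ θ y :=
    hsqrt.mono fun y hy => contDiffAt_fst.prodMk (contDiffAt_snd.mul hy)
  have hθ₀ : θ 0 = 0 := by simp [θ]
  have hθd : HasFDerivAt θ _ 0 := hasFDerivAt_fst.prodMk
    (hasFDerivAt_snd.mul (hsqrt.self_of_nhds.differentiableAt (by simp)).hasFDerivAt)
  obtain ⟨ψ, hψ, hψ₀, hψd, hθψ⟩ := exists_contDiff_rightInverse hθ fun x hx => by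
    rw [hθd.fderiv] at hx
    have hx₁ : x.1 = 0 := congrArg Prod.fst hx
    have hx₂ : x.2 = 0 := by simpa [(Real.sqrt_pos.2 hβ₀).ne'] using congrArg Prod.snd hx
    exact Prod.ext hx₁ hx₂
  rw [hθ₀] at hψ₀ hψd hθψ
  refine ⟨ψ, hψ, hψd, hψ₀, ?_⟩
  filter_upwards [hθψ, (hψ.continuous.tendsto' 0 0 hψ₀).eventually hpos] with z hz hβz
  have hz₁ : (θ (ψ z)).1 = z.1 := congrArg Prod.fst hz
  have hz₂ : (ψ z).2 * Real.sqrt (β (ψ z)) = z.2 :=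
    (congrArg Prod.snd hz : (θ (ψ z)).2 = z.2)
  exact ⟨hz₁, by rw [← hz₂, mul_pow, Real.sq_sqrt hβz.le]⟩

theorem isLocalDiffeoAt_shear {a l : ℝ → ℝ} {m : ℝ × ℝ → ℝ} {c : ℝ} (ha : ContDiff ℝ ∞ a)
    (hl : ContDiff ℝ ∞ l) (hm : ContDiff ℝ ∞ m) (hc : c ≠ 0) (p : R3) :
    IsLocalDiffeoAt (fun y : R3 => (![y 0, c⁻¹ * (y 1 - a (y 0)),
      y 2 - l (y 0) - m (y 0, c⁻¹ * (y 1 - a (y 0)))] : R3)) p := by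
  have hsmooth : ContDiff ℝ ∞ fun y : R3 => (![y 0, c⁻¹ * (y 1 - a (y 0)),
      y 2 - l (y 0) - m (y 0, c⁻¹ * (y 1 - a (y 0)))] : R3) :=
    contDiff_vec3 (by fun_prop) (by fun_prop) (by fun_prop)
  have hsmooth' : ContDiff ℝ ∞ fun z : R3 =>
      (![z 0, c * z 1 + a (z 0), z 2 + l (z 0) + m (z 0, z 1)] : R3) :=
    contDiff_vec3 (by fun_prop) (by fun_prop) (by fun_prop)
  refine isLocalDiffeoAt_of_inverse hsmooth hsmooth' (fun y => ?_) (fun z => ?_) p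
  · ext i
    fin_cases i <;> simp [hc, sub_sub, add_assoc]
  · ext i
    fin_cases i <;> simp [hc, add_sub_right_comm]

theorem exists_aequivAt_cuspidalGerm_of_graph {D : ℝ × ℝ → R3} (hD : ContDiff ℝ ∞ D)
    (hfst : ∀ᶠ y in 𝓝 (0 : ℝ × ℝ), D y 0 = y.1) (hax : ∀ᶠ u in 𝓝 (0 : ℝ), pv D (u, 0) = 0)
    (hvv : pv (pv D) 0 1 ≠ 0) :
    ∃ b, ContDiff ℝ ∞ b ∧ AEquivAt D 0 (cuspidalGerm b) 0 := by
  obtain ⟨Q, hQ, hQ₀, hDQ⟩ := exists_contDiff_eq_add_sq_smul hD hax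
  have hQi (i : Fin 3) : ContDiff ℝ ∞ fun y => Q y i := contDiff_pi.1 hQ i
  have hc : Q 0 1 ≠ 0 := fun h0 => hvv (by simp [hQ₀, h0])
  obtain ⟨ψ, hψ, hψd, hψ₀, hψQ⟩ := exists_isLocalDiffeoAt_sq_mul_eq_sq
    (β := fun y => (Q 0 1)⁻¹ * Q y 1) (contDiff_const.mul (hQi 1)) (by simp [hc])
  have hψt : Tendsto ψ (𝓝 0) (𝓝 0) := hψ.continuous.tendsto' 0 0 hψ₀
  have hQne : ∀ᶠ z in 𝓝 0, Q (ψ z) 1 ≠ 0 :=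
    hψt.eventually ((hQi 1).continuous.continuousAt.eventually_ne hc)
  obtain ⟨g, hg, -, hgQ⟩ := exists_contDiff_hasCompactSupport_eventuallyEq
    (f := fun z => Q (ψ z) 2 * Q 0 1 / Q (ψ z) 1) (hQne.mono fun z hz =>
      (((hQi 2).comp hψ).mul contDiff_const).contDiffAt.div ((hQi 1).comp hψ).contDiffAt hz)
  obtain ⟨e, b, he, hb, hgeb⟩ := exists_contDiff_eq_even_add_odd hg
  have hDax (i : Fin 3) : ContDiff ℝ ∞ fun u : ℝ => D (u, 0) i :=
    contDiff_pi.1 (hD.comp (by fun_prop : ContDiff ℝ ∞ fun u : ℝ => (u, (0 : ℝ)))) i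
  refine ⟨b, hb, (aequivAt_comp_source hψd hψ₀).trans (aequivAt_of_comp_target_eventuallyEq
    (isLocalDiffeoAt_shear (hDax 1) (hDax 2) (contDiff_snd.mul he) hc _) ?_)⟩
  filter_upwards [hψt.eventually hfst, hψt.eventually hDQ, hψQ, hQne, hgQ, hgeb]
    with z hz₀ hz ⟨hz₁, hz₂⟩ hne hgz hebz
  have hsnd : (Q 0 1)⁻¹ * (D (ψ z) 1 - D (z.1, 0) 1) = z.2 ^ 2 := by
    rw [hz, hz₁, ← hz₂]
    simp
    ring
  have hthd : D (ψ z) 2 - D (z.1, 0) 2 = z.2 ^ 2 * g z := by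
    rw [hz, hz₁, ← hz₂, hgz]
    simp
    field_simp
  rw [hebz] at hthd
  ext i
  fin_cases i
  · simp [cuspidalGerm, hz₀, hz₁]
  · simp [cuspidalGerm, hz₀, hz₁, hsnd]
  · simp [cuspidalGerm, hz₀, hz₁, hsnd, hthd]
    ring

/-- A vector field `V` along which the derivative of `C` is `σ • ν`, so that `C` is singular along
`{σ = 0}` with kernel `V`. The origin is a point of that set, `V` is there a multiple of `∂_v`, and
`{σ = 0}` is a curve transverse to `V`: a singularity of the first kind. -/
structure IsNullField {E : Type*} [NormedAddCommGroup E] [NormedSpace ℝ E] (C ν : ℝ × ℝ → E)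
    (σ : ℝ × ℝ → ℝ) (V : ℝ × ℝ → ℝ × ℝ) : Prop where
  contDiff_map : ContDiff ℝ ∞ C
  contDiff_direction : ContDiff ℝ ∞ ν
  contDiff_factor : ContDiff ℝ ∞ σ
  contDiff_field : ContDiff ℝ ∞ V
  fderiv_apply (p : ℝ × ℝ) : fderiv ℝ C p (V p) = σ p • ν p
  field_fst : (V 0).1 = 0
  field_snd : (V 0).2 ≠ 0
  factor_zero : σ 0 = 0
  pv_factor : pv σ 0 ≠ 0

namespace IsNullField

variable {E : Type*} [NormedAddCommGroup E] [NormedSpace ℝ E] {C ν : ℝ × ℝ → E}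
  {σ : ℝ × ℝ → ℝ} {V : ℝ × ℝ → ℝ × ℝ}

theorem comp_clm_sub {G : Type*} [NormedAddCommGroup G] [NormedSpace ℝ G]
    (h : IsNullField C ν σ V) (A : E →L[ℝ] G) (c : E) :
    IsNullField (fun p => A (C p - c)) (fun p => A (ν p)) σ V where
  contDiff_map := A.contDiff.comp (h.contDiff_map.sub contDiff_const)
  contDiff_direction := A.contDiff.comp h.contDiff_direction
  contDiff_factor := h.contDiff_factor
  contDiff_field := h.contDiff_field
  fderiv_apply p := by
    have hd : HasFDerivAt (fun p => A (C p - c)) (A ∘L fderiv ℝ C p) p := A.hasFDerivAt.comp p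
      ((h.contDiff_map.differentiable (by simp) p).hasFDerivAt.sub_const c)
    rw [hd.fderiv, ContinuousLinearMap.comp_apply, h.fderiv_apply, map_smul]
  field_fst := h.field_fst
  field_snd := h.field_snd
  factor_zero := h.factor_zero
  pv_factor := h.pv_factor

theorem pv_map_zero (h : IsNullField C ν σ V) : pv C 0 = 0 := by
  have hV := h.fderiv_apply 0
  rw [fderiv_apply_eq_pu_add_pv, h.field_fst, h.factor_zero, zero_smul, zero_smul, zero_add] at hV
  exact (smul_eq_zero.1 hV).resolve_left h.field_snd

theorem fst_eq_zero_of_apply_fderiv_eq_zero (h : IsNullField C ν σ V) {ℓ : E →L[ℝ] ℝ}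
    (hu : ℓ (pu C 0) ≠ 0) {w : ℝ × ℝ} (hw : ℓ (fderiv ℝ C 0 w) = 0) : w.1 = 0 := by
  rw [fderiv_apply_eq_pu_add_pv, h.pv_map_zero, smul_zero, add_zero, map_smul] at hw
  exact (smul_eq_zero.1 hw).resolve_right hu

theorem fderiv_apply_of_apply_eq_zero (h : IsNullField C ν σ V) {ℓ : E →L[ℝ] ℝ} {p w : ℝ × ℝ}
    (hV : (V p).2 ≠ 0) (hu : ℓ (pu C p) ≠ 0) (hw : ℓ (fderiv ℝ C p w) = 0) :
    fderiv ℝ C p w =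
      σ p • (w.2 / (V p).2) • (ν p - (ℓ (ν p) / ℓ (pu C p)) • pu C p) := by
  have hν := h.fderiv_apply p
  rw [fderiv_apply_eq_pu_add_pv] at hν hw ⊢
  have hv : pv C p = (V p).2⁻¹ • (σ p • ν p - (V p).1 • pu C p) := by
    rw [← hν, add_sub_cancel_left, inv_smul_smul₀ hV]
  rw [hv] at hw ⊢
  have hw₁ : w.1 = w.2 / (V p).2 * ((V p).1 - σ p * (ℓ (ν p) / ℓ (pu C p))) := by
    simp only [map_add, map_smul, map_sub, smul_eq_mul] at hw
    field_simp at hw ⊢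
    linear_combination hw
  rw [hw₁]
  module

theorem exists_coordinates (h : IsNullField C ν σ V) {ℓ : E →L[ℝ] ℝ} (hu : ℓ (pu C 0) ≠ 0) :
    ∃ ψ : ℝ × ℝ → ℝ × ℝ, ContDiff ℝ ∞ ψ ∧ IsLocalDiffeoAt ψ 0 ∧ ψ 0 = 0 ∧
      ∀ᶠ y in 𝓝 (0 : ℝ × ℝ), ℓ (C (ψ y)) - ℓ (C 0) = y.1 ∧ σ (ψ y) = y.2 := by
  have hC := h.contDiff_map
  let θ : ℝ × ℝ → ℝ × ℝ := fun y => (ℓ (C y) - ℓ (C 0), σ y)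
  have hθ : ContDiff ℝ ∞ θ := ((ℓ.contDiff.comp hC).sub contDiff_const).prodMk h.contDiff_factor
  have hθd : HasFDerivAt θ _ 0 :=
    ((ℓ.hasFDerivAt.comp 0 (hC.differentiable (by simp) 0).hasFDerivAt).sub_const _).prodMk
      (h.contDiff_factor.differentiable (by simp) 0).hasFDerivAt
  have hθ₀ : θ 0 = 0 := by simp [θ, h.factor_zero]
  obtain ⟨ψ, hψ, hψ₀, hψd, hθψ⟩ := exists_contDiff_rightInverse
    (.of_forall fun p => hθ.contDiffAt) fun w hw => by
      rw [hθd.fderiv] at hw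
      have hw₁ := h.fst_eq_zero_of_apply_fderiv_eq_zero hu (congrArg Prod.fst hw)
      have hw₂ := (fderiv_apply_of_fst_eq_zero σ 0 hw₁).symm.trans (congrArg Prod.snd hw)
      exact Prod.ext hw₁ ((mul_eq_zero.1 hw₂).resolve_right h.pv_factor)
  rw [hθ₀] at hψ₀ hψd hθψ
  exact ⟨ψ, hψ, hψd, hψ₀, hθψ.mono fun y hy => Prod.mk.inj hy⟩

theorem apply_fderiv_pv_coordinates (h : IsNullField C ν σ V) {ℓ : E →L[ℝ] ℝ} {c : ℝ}
    {ψ : ℝ × ℝ → ℝ × ℝ} {y : ℝ × ℝ} (hψ : DifferentiableAt ℝ ψ y)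
    (hℓ : ∀ᶠ y in 𝓝 y, ℓ (C (ψ y)) - c = y.1) (hσ : ∀ᶠ y in 𝓝 y, σ (ψ y) = y.2) :
    ℓ (fderiv ℝ C (ψ y) (pv ψ y)) = 0 ∧ fderiv ℝ σ (ψ y) (pv ψ y) = 1 := by
  have hd₁ := ((ℓ.hasFDerivAt.comp y ((h.contDiff_map.differentiable (by simp)
    (ψ y)).hasFDerivAt.comp y hψ.hasFDerivAt)).sub_const c).unique
    (hasFDerivAt_fst.congr_of_eventuallyEq hℓ)
  have hd₂ := ((h.contDiff_factor.differentiable (by simp) (ψ y)).hasFDerivAt.comp y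
    hψ.hasFDerivAt).unique (hasFDerivAt_snd.congr_of_eventuallyEq hσ)
  exact ⟨DFunLike.congr_fun hd₁ (0, 1), DFunLike.congr_fun hd₂ (0, 1)⟩

/-- In the coordinates `ℓ ∘ C`, `σ` the second coordinate derivative of `C` is tangent to `ker ℓ`,
hence divisible by `σ`. -/
theorem exists_pv_comp_eq_snd_smul (h : IsNullField C ν σ V) {ℓ : E →L[ℝ] ℝ}
    (hu : ℓ (pu C 0) ≠ 0) {c : ℝ} {ψ : ℝ × ℝ → ℝ × ℝ} (hψ : ContDiff ℝ ∞ ψ) (hψ₀ : ψ 0 = 0)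
    (hℓ : ∀ᶠ y in 𝓝 0, ℓ (C (ψ y)) - c = y.1) (hσ : ∀ᶠ y in 𝓝 0, σ (ψ y) = y.2) :
    ∃ W : ℝ × ℝ → E, ContinuousAt W 0 ∧ (∀ᶠ y in 𝓝 0, pv (C ∘ ψ) y = y.2 • W y) ∧
      W 0 = ((pv ψ 0).2 / (V 0).2) • (ν 0 - (ℓ (ν 0) / ℓ (pu C 0)) • pu C 0) := by
  have hV : Continuous fun y => (V (ψ y)).2 :=
    continuous_snd.comp (h.contDiff_field.continuous.comp hψ.continuous)
  have hν : Continuous fun y => ν (ψ y) := h.contDiff_direction.continuous.comp hψ.continuous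
  have hC : Continuous fun y => pu C (ψ y) :=
    (contDiff_pu h.contDiff_map).continuous.comp hψ.continuous
  have hℓC : Continuous fun y => ℓ (pu C (ψ y)) := ℓ.continuous.comp hC
  have hV₀ : (V (ψ 0)).2 ≠ 0 := hψ₀.symm ▸ h.field_snd
  have hu₀ : ℓ (pu C (ψ 0)) ≠ 0 := hψ₀.symm ▸ hu
  refine ⟨fun y => ((pv ψ y).2 / (V (ψ y)).2) •
    (ν (ψ y) - (ℓ (ν (ψ y)) / ℓ (pu C (ψ y))) • pu C (ψ y)), ?_, ?_, by simp only [hψ₀]⟩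
  · exact ((contDiff_pv hψ).continuous.snd.continuousAt.div₀ hV.continuousAt hV₀).smul
      (hν.continuousAt.sub (((ℓ.continuous.comp hν).continuousAt.div₀ hℓC.continuousAt hu₀).smul
        hC.continuousAt))
  · filter_upwards [hℓ.eventually_nhds, hσ.eventually_nhds,
      hV.continuousAt.eventually_ne hV₀, hℓC.continuousAt.eventually_ne hu₀] with y hℓy hσy hVy huy
    have hψy := hψ.differentiable (by simp) y
    have hw := (h.apply_fderiv_pv_coordinates hψy hℓy hσy).1
    rw [pv, fderiv_comp y (h.contDiff_map.differentiable (by simp) _) hψy,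
      ContinuousLinearMap.comp_apply, ← pv, h.fderiv_apply_of_apply_eq_zero hVy huy hw,
      hσy.self_of_nhds]

theorem exists_straightening (h : IsNullField C ν σ V) {ℓ : E →L[ℝ] ℝ} (hu : ℓ (pu C 0) ≠ 0)
    (hν : ℓ (ν 0) = 0) :
    ∃ ψ : ℝ × ℝ → ℝ × ℝ, ContDiff ℝ ∞ ψ ∧ IsLocalDiffeoAt ψ 0 ∧ ψ 0 = 0 ∧
      (∀ᶠ y in 𝓝 (0 : ℝ × ℝ), ℓ (C (ψ y)) - ℓ (C 0) = y.1) ∧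
      (∀ᶠ u in 𝓝 (0 : ℝ), pv (C ∘ ψ) (u, 0) = 0) ∧
      ∃ c : ℝ, c ≠ 0 ∧ pv (pv (C ∘ ψ)) 0 = c • ν 0 := by
  obtain ⟨ψ, hψ, hψd, hψ₀, hℓσ⟩ := h.exists_coordinates hu
  obtain ⟨hℓ, hσ⟩ := eventually_and.1 hℓσ
  obtain ⟨W, hW, hpvC, hW₀⟩ := h.exists_pv_comp_eq_snd_smul hu hψ hψ₀ hℓ hσ
  have hw := h.apply_fderiv_pv_coordinates (hψ.differentiable (by simp) 0) hℓ hσ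
  rw [hψ₀] at hw
  have hw₂ : (pv ψ 0).2 ≠ 0 := fun hw₀ => by
    simpa [fderiv_apply_of_fst_eq_zero σ 0 (h.fst_eq_zero_of_apply_fderiv_eq_zero hu hw.1), hw₀]
      using hw.2
  have hax : Tendsto (fun u : ℝ => (u, (0 : ℝ))) (𝓝 0) (𝓝 0) := by
    exact Continuous.tendsto' (by fun_prop) _ _ rfl
  refine ⟨ψ, hψ, hψd, hψ₀, hℓ, (hax.eventually hpvC).mono fun u hu => by rw [hu, zero_smul],
    (pv ψ 0).2 / (V 0).2, div_ne_zero hw₂ h.field_snd, ?_⟩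
  have hD := contDiff_pv (h.contDiff_map.comp hψ)
  rw [pv_eq_of_eventuallyEq_snd_smul rfl (hD.differentiable (by simp) 0) hW hpvC, hW₀, hν,
    zero_div, zero_smul, sub_zero]

theorem exists_aequivAt_cuspidalGerm {C ν : ℝ × ℝ → R3} (h : IsNullField C ν σ V) {X : R3}
    (hli : LinearIndependent ℝ ![pu C 0, ν 0, X]) :
    ∃ b, ContDiff ℝ ∞ b ∧ AEquivAt C 0 (cuspidalGerm b) 0 := by
  let B := basisOfLinearIndependentOfCardEqFinrank hli (by simp)
  let A : R3 ≃L[ℝ] R3 := B.equivFun.toContinuousLinearEquiv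
  have hA (i : Fin 3) : A (![pu C 0, ν 0, X] i) = Pi.single i 1 := by
    rw [show ![pu C 0, ν 0, X] i = B i by simp [B]]
    ext j
    simp [A, Pi.single_apply, eq_comm]
  let D : ℝ × ℝ → R3 := fun p => A (C p - C 0)
  have hD : IsNullField D (fun p => A (ν p)) σ V := h.comp_clm_sub (A : R3 →L[ℝ] R3) (C 0)
  have hD₀ : D 0 = 0 := by simp [D]
  have hpuD : pu D 0 = A (pu C 0) := by
    have hd : HasFDerivAt D _ 0 := A.hasFDerivAt.comp 0
      ((h.contDiff_map.differentiable (by simp) 0).hasFDerivAt.sub_const (C 0))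
    rw [pu, hd.fderiv]
    rfl
  have hproj := hD.exists_straightening (ℓ := ContinuousLinearMap.proj 0)
    (by rw [hpuD]; simp [show A (pu C 0) = _ from hA 0]) (by simpa using congrFun (hA 1) 0)
  obtain ⟨ψ, hψ, hψd, hψ₀, hfst, hax, c, hc, hvv⟩ := hproj
  have hvv₁ : pv (pv (D ∘ ψ)) 0 1 ≠ 0 := by
    have hν₁ : A (ν 0) 1 = 1 := by simpa using congrFun (hA 1) 1
    simp [hvv, hν₁, hc]
  obtain ⟨b, hb, hbD⟩ := exists_aequivAt_cuspidalGerm_of_graph (hD.contDiff_map.comp hψ)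
    (hfst.mono fun y hy => by simpa [hD₀] using hy) hax hvv₁
  have hCD : AEquivAt C 0 D 0 := aequivAt_of_comp_target_eventuallyEq
    (isLocalDiffeoAt_of_inverse (f := fun y => A (y - C 0)) (g := fun z => A.symm z + C 0)
      (A.contDiff.comp (contDiff_id.sub contDiff_const)) (A.symm.contDiff.add contDiff_const)
      (fun y => by simp) (fun z => by simp) _) (.of_forall fun _ => rfl)
  exact ⟨b, hb, hCD.trans ((aequivAt_comp_source hψd hψ₀).trans hbD)⟩

end IsNullField

end NormalForm

section VectorAlgebra

variable (a b c : R3) (t : ℝ)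

theorem dot3_add_left : dot3 (a + b) c = dot3 a c + dot3 b c := by
  simp only [dot3, Pi.add_apply]
  ring

theorem dot3_add_right : dot3 a (b + c) = dot3 a b + dot3 a c := by
  simp only [dot3, Pi.add_apply]
  ring

theorem dot3_smul_left : dot3 (t • a) b = t * dot3 a b := by
  simp only [dot3, Pi.smul_apply, smul_eq_mul]
  ring

theorem dot3_smul_right : dot3 a (t • b) = t * dot3 a b := by
  simp only [dot3, Pi.smul_apply, smul_eq_mul]
  ring

theorem dot3_zero_left : dot3 0 a = 0 := by
  simp [dot3]

theorem dot3_zero_right : dot3 a 0 = 0 := by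
  simp [dot3]

theorem dot3_comm : dot3 a b = dot3 b a := by
  simp only [dot3, mul_comm]

theorem dot3_self_eq_zero : dot3 a a = 0 ↔ a = 0 := by
  rw [← dotProduct_self_eq_zero, dotProduct, Fin.sum_univ_three, dot3]

/-- The scalar triple product, as the determinant with rows `a`, `b`, `c`. -/
def det3 (a b c : R3) : ℝ := (Matrix.of ![a, b, c]).det

theorem det3_eq : det3 a b c = a 0 * b 1 * c 2 - a 0 * b 2 * c 1 - a 1 * b 0 * c 2 +
    a 1 * b 2 * c 0 + a 2 * b 0 * c 1 - a 2 * b 1 * c 0 :=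
  Matrix.det_fin_three _

theorem det3_smul_left : det3 (t • a) b c = t * det3 a b c := by
  simp only [det3_eq, Pi.smul_apply, smul_eq_mul]
  ring

theorem det3_ne_zero_iff : det3 a b c ≠ 0 ↔ LinearIndependent ℝ ![a, b, c] := by
  rw [det3, ← isUnit_iff_ne_zero, ← Matrix.isUnit_iff_isUnit_det,
    ← Matrix.linearIndependent_rows_iff_isUnit]
  rfl

variable {a b c} {n w x z : R3}

theorem det3_mul_dot3_of_orthogonal (hxa : dot3 x a = 0) (hxn : dot3 x n = 0)
    (hxw : dot3 x w = 0) (hza : dot3 z a = 0) :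
    det3 a n x * dot3 z w = det3 a w x * dot3 z n := by
  have key : det3 a n x * dot3 z w = det3 w n x * dot3 z a + det3 a w x * dot3 z n +
      (det3 z n w * dot3 x a + det3 a z w * dot3 x n + det3 a n z * dot3 x w) := by
    simp only [dot3, det3_eq]
    ring
  rw [key, hxa, hxn, hxw, hza]
  ring

theorem dot3_self_mul_det3_of_orthogonal (hxa : dot3 x a = 0) (hxb : dot3 x b = 0) :
    dot3 x x * det3 a b c = det3 a b x * dot3 x c := by
  have key : dot3 x x * det3 a b c = det3 x b c * dot3 x a + det3 a x c * dot3 x b +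
      det3 a b x * dot3 x c := by
    simp only [dot3, det3_eq]
    ring
  rw [key, hxa, hxb]
  ring

theorem det3_map_single_ne_zero {T : R3 →L[ℝ] R3} (hT : ∀ w, T w = 0 → w = 0) :
    det3 (T (Pi.single 0 1)) (T (Pi.single 1 1)) (T (Pi.single 2 1)) ≠ 0 := by
  rw [det3_ne_zero_iff, Fintype.linearIndependent_iff]
  intro g hg i
  simp only [Fin.sum_univ_three, Matrix.cons_val, ← map_smul, ← map_add] at hg
  have hi := congrFun (hT _ hg) i
  fin_cases i <;> simpa using hi

theorem eq_zero_of_smul_add_smul_eq_zero (h : det3 a b c ≠ 0) {s t : ℝ}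
    (hst : s • a + t • b = 0) : s = 0 ∧ t = 0 := by
  have hli := Fintype.linearIndependent_iff.1 ((det3_ne_zero_iff a b c).1 h) ![s, t, 0]
    (by simpa [Fin.sum_univ_three] using hst)
  exact ⟨hli 0, hli 1⟩

theorem eq_zero_of_dot3_eq_zero {a b c w : R3} (hli : LinearIndependent ℝ ![a, b, c])
    (ha : dot3 a w = 0) (hb : dot3 b w = 0) (hc : dot3 c w = 0) : w = 0 := by
  refine Matrix.eq_zero_of_mulVec_eq_zero ((det3_ne_zero_iff a b c).2 hli) ?_
  ext i
  fin_cases i <;> simpa [Matrix.mulVec, dotProduct, Fin.sum_univ_three]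

theorem det3_mul_det3 (a b c x y z : R3) : det3 a b c * det3 x y z =
    dot3 a x * (dot3 b y * dot3 c z - dot3 b z * dot3 c y) -
    dot3 a y * (dot3 b x * dot3 c z - dot3 b z * dot3 c x) +
    dot3 a z * (dot3 b x * dot3 c y - dot3 b y * dot3 c x) := by
  simp only [dot3, det3_eq]
  ring

end VectorAlgebra

section VectorCalculus

variable {X : Type*} [TopologicalSpace X] {E : Type*} [NormedAddCommGroup E] [NormedSpace ℝ E]
  {A B : E → R3} {p : E}

theorem contDiff_dot3 (hA : ContDiff ℝ ∞ A) (hB : ContDiff ℝ ∞ B) :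
    ContDiff ℝ ∞ fun p => dot3 (A p) (B p) := by
  have hA' := contDiff_pi.1 hA
  have hB' := contDiff_pi.1 hB
  exact (((hA' 0).mul (hB' 0)).add ((hA' 1).mul (hB' 1))).add ((hA' 2).mul (hB' 2))

theorem continuousAt_dot3 {A B : X → R3} {p : X} (hA : ContinuousAt A p) (hB : ContinuousAt B p) :
    ContinuousAt (fun p => dot3 (A p) (B p)) p := by
  have hA' := continuousAt_pi.1 hA
  have hB' := continuousAt_pi.1 hB
  exact (((hA' 0).mul (hB' 0)).add ((hA' 1).mul (hB' 1))).add ((hA' 2).mul (hB' 2))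

theorem continuousAt_det3 {A B D : X → R3} {p : X} (hA : ContinuousAt A p)
    (hB : ContinuousAt B p) (hD : ContinuousAt D p) :
    ContinuousAt (fun p => det3 (A p) (B p) (D p)) p := by
  have hA' := continuousAt_pi.1 hA
  have hB' := continuousAt_pi.1 hB
  have hD' := continuousAt_pi.1 hD
  simp only [det3_eq]
  fun_prop

theorem hasFDerivAt_dot3 {A' B' : E →L[ℝ] R3} (hA : HasFDerivAt A A' p)
    (hB : HasFDerivAt B B' p) : ∃ L : E →L[ℝ] ℝ, HasFDerivAt (fun p => dot3 (A p) (B p)) L p ∧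
      ∀ w, L w = dot3 (A' w) (B p) + dot3 (A p) (B' w) := by
  have hA' := hasFDerivAt_pi'.1 hA
  have hB' := hasFDerivAt_pi'.1 hB
  refine ⟨_, (((hA' 0).mul (hB' 0)).add ((hA' 1).mul (hB' 1))).add ((hA' 2).mul (hB' 2)),
    fun w => ?_⟩
  simp only [dot3, add_apply, smul_apply,
    ContinuousLinearMap.comp_apply, ContinuousLinearMap.proj_apply, smul_eq_mul]
  ring

theorem fderiv_dot3 (hA : DifferentiableAt ℝ A p) (hB : DifferentiableAt ℝ B p) (w : E) :
    fderiv ℝ (fun p => dot3 (A p) (B p)) p w =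
      dot3 (fderiv ℝ A p w) (B p) + dot3 (A p) (fderiv ℝ B p w) := by
  obtain ⟨L, hL, hLw⟩ := hasFDerivAt_dot3 hA.hasFDerivAt hB.hasFDerivAt
  rw [hL.fderiv, hLw]

theorem dot3_fderiv_add_eq_zero {c : ℝ} (hA : DifferentiableAt ℝ A p) (hB : DifferentiableAt ℝ B p)
    (hAB : ∀ q, dot3 (A q) (B q) = c) (w : E) :
    dot3 (fderiv ℝ A p w) (B p) + dot3 (A p) (fderiv ℝ B p w) = 0 := by
  rw [← fderiv_dot3 hA hB, funext hAB, fderiv_fun_const, Pi.zero_apply, zero_apply]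

/-- Both sides are `-⟨x, d²C(v, w)⟩`. -/
theorem dot3_fderiv_fderiv_comm {x C : E → R3} (hx : DifferentiableAt ℝ x p)
    (hC : ContDiff ℝ ∞ C) (hxC : ∀ q w, dot3 (x q) (fderiv ℝ C q w) = 0) (v w : E) :
    dot3 (fderiv ℝ x p v) (fderiv ℝ C p w) = dot3 (fderiv ℝ x p w) (fderiv ℝ C p v) := by
  have hC' : DifferentiableAt ℝ (fderiv ℝ C) p :=
    (hC.fderiv_right (m := ∞) le_rfl).differentiable (by simp) p
  have hd (v w : E) : dot3 (fderiv ℝ x p v) (fderiv ℝ C p w) +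
      dot3 (x p) (fderiv ℝ (fderiv ℝ C) p v w) = 0 := by
    have hvw := fderiv_dot3 hx (hC'.clm_apply (differentiableAt_const w)) v
    simp only [hxC, fderiv_fun_const, Pi.zero_apply, zero_apply,
      fderiv_clm_apply hC' (differentiableAt_const w), add_apply,
      ContinuousLinearMap.comp_apply, ContinuousLinearMap.flip_apply, map_zero, zero_add] at hvw
    exact hvw.symm
  linear_combination hd v w - hd w v -
    congrArg (dot3 (x p)) (isSymmSndFDerivAt_of_contDiff hC p v w)

theorem hasDerivAt_mul_of_eq_zero {m g : ℝ → ℝ} {d t : ℝ} (hm : ContinuousAt m t)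
    (hg : HasDerivAt g d t) (hgt : g t = 0) : HasDerivAt (fun u => m u * g u) (m t * d) t := by
  rw [hasDerivAt_iff_tendsto_slope] at hg ⊢
  refine ((hm.mono_left nhdsWithin_le_nhds).mul hg).congr fun u => ?_
  simp only [slope, hgt, vsub_eq_sub, sub_zero, smul_eq_mul, mul_zero]
  ring

end VectorCalculus

section Criterion

theorem eq_zero_of_fderiv_eq_zero_of_leftInverse {E F : Type*} [NormedAddCommGroup E]
    [NormedSpace ℝ E] [NormedAddCommGroup F] [NormedSpace ℝ F] {f : E → F} {g : F → E} {p : E}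
    (hf : DifferentiableAt ℝ f p) (hg : DifferentiableAt ℝ g (f p))
    (hgf : ∀ᶠ x in 𝓝 p, g (f x) = x) {w : E} (hw : fderiv ℝ f p w = 0) : w = 0 := by
  have hid := DFunLike.congr_fun ((hg.hasFDerivAt.comp p hf.hasFDerivAt).unique
    ((hasFDerivAt_id p).congr_of_eventuallyEq hgf)) w
  rw [ContinuousLinearMap.comp_apply, hw, map_zero] at hid
  exact hid.symm

theorem AEquivAt.exists_eventually_eq {f g : ℝ × ℝ → R3} {p q : ℝ × ℝ} (hf : ContinuousAt f p)
    (h : AEquivAt f p g q) : ∃ (φ : ℝ × ℝ → ℝ × ℝ) (Ψ : R3 → R3), ContDiffAt ℝ ∞ φ q ∧ φ q = p ∧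
      ContDiffAt ℝ ∞ Ψ (g q) ∧ (∀ w, fderiv ℝ φ q w = 0 → w = 0) ∧
      (∀ w, fderiv ℝ Ψ (g q) w = 0 → w = 0) ∧ ∀ᶠ x in 𝓝 q, f (φ x) = Ψ (g x) := by
  obtain ⟨φ, Φ, ⟨hφ, φ', hφ', hφl, -⟩, hφq, ⟨hΦ, Ψ, hΨ, hΨl, hΨr⟩, hfg⟩ := h
  have hq : Φ (f p) = g q := hφq ▸ hfg.self_of_nhds
  have hp : Ψ (g q) = f p := hq ▸ hΨl.self_of_nhds
  rw [hq] at hΨ hΨr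
  have hfφ : Tendsto (fun x => f (φ x)) (𝓝 q) (𝓝 (f p)) :=
    hf.tendsto.comp (hφq ▸ hφ.continuousAt.tendsto)
  refine ⟨φ, Ψ, hφ, hφq, hΨ, fun w => eq_zero_of_fderiv_eq_zero_of_leftInverse
    (hφ.differentiableAt (by simp)) (hφ'.differentiableAt (by simp)) hφl, fun w =>
    eq_zero_of_fderiv_eq_zero_of_leftInverse (hΨ.differentiableAt (by simp))
      (hp ▸ hΦ.differentiableAt (by simp)) hΨr, ?_⟩
  filter_upwards [hfφ.eventually hΨl, hfg] with x hx hx'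
  rw [← hx', hx]

theorem fderiv_cuspidalGerm {b : ℝ × ℝ → ℝ} (hb : ContDiff ℝ ∞ b) (p w : ℝ × ℝ) :
    fderiv ℝ (cuspidalGerm b) p w = ![w.1, 2 * p.2 * w.2, 3 * p.2 ^ 2 * w.2 * b (p.1, p.2 ^ 2) +
      p.2 ^ 3 * (w.1 * pu b (p.1, p.2 ^ 2) + 2 * p.2 * w.2 * pv b (p.1, p.2 ^ 2))] := by
  have hd := hasFDerivAt_pi'.1
    ((contDiff_cuspidalGerm hb).differentiable (by simp) p).hasFDerivAt
  have hsnd := hasFDerivAt_snd (𝕜 := ℝ) (p := p)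
  have hbd := HasFDerivAt.comp (g := b) p (hb.differentiable (by simp) _).hasFDerivAt
    (hasFDerivAt_fst.prodMk (hsnd.pow 2))
  ext i
  fin_cases i
  · exact DFunLike.congr_fun ((hd 0).unique hasFDerivAt_fst) w
  · simpa using DFunLike.congr_fun ((hd 1).unique (hsnd.pow 2)) w
  · refine (DFunLike.congr_fun ((hd 2).unique (hbd.mul (hsnd.pow 3))) w).trans ?_
    simp [fderiv_apply_eq_pu_add_pv b]
    ring

theorem pu_cuspidalGerm_zero {b : ℝ × ℝ → ℝ} (hb : ContDiff ℝ ∞ b) :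
    pu (cuspidalGerm b) 0 = Pi.single 0 1 := by
  rw [pu, fderiv_cuspidalGerm hb]
  ext i
  fin_cases i <;> simp

theorem pv_cuspidalGerm {b : ℝ × ℝ → ℝ} (hb : ContDiff ℝ ∞ b) (p : ℝ × ℝ) :
    pv (cuspidalGerm b) p = (2 * p.2) • (Pi.single 1 1 + (p.2 * (3 / 2 * b (p.1, p.2 ^ 2) +
      p.2 ^ 2 * pv b (p.1, p.2 ^ 2))) • Pi.single 2 1) := by
  rw [pv, fderiv_cuspidalGerm hb]
  ext i
  fin_cases i
  · simp
  · simp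
  · simp
    ring

theorem eventually_fderiv_comp_eq {f g : ℝ × ℝ → R3} {φ : ℝ × ℝ → ℝ × ℝ} {Ψ : R3 → R3}
    {p : ℝ × ℝ} (hf : ContDiff ℝ ∞ f) (hg : ContDiff ℝ ∞ g) (hφ : ContDiffAt ℝ ∞ φ p)
    (hΨ : ContDiffAt ℝ ∞ Ψ (g p)) (hfg : ∀ᶠ x in 𝓝 p, f (φ x) = Ψ (g x)) :
    ∀ᶠ x in 𝓝 p, ∀ w,
      fderiv ℝ f (φ x) (fderiv ℝ φ x w) = fderiv ℝ Ψ (g x) (fderiv ℝ g x w) := by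
  filter_upwards [hfg.eventually_nhds, (hφ.of_le (m := 1) ENat.LEInfty.out).eventually (by simp),
    hg.continuous.continuousAt.eventually
      ((hΨ.of_le (m := 1) ENat.LEInfty.out).eventually (by simp))] with x hx hφx hΨx w
  have hΨg := (hΨx.differentiableAt one_ne_zero).hasFDerivAt.comp x
    (hg.differentiable (by simp) x).hasFDerivAt
  exact DFunLike.congr_fun (((hf.differentiable (by simp) _).hasFDerivAt.comp x
    (hφx.differentiableAt one_ne_zero).hasFDerivAt).unique (hΨg.congr_of_eventuallyEq hx)) w

section NormalCovector

variable {y G : ℝ × ℝ → R3} {Ψ : R3 → R3} {s : ℝ × ℝ → ℝ} {a c : R3} {p : ℝ × ℝ}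

theorem dot3_fderiv_eq_zero_of_snd_eq_zero (hp : p.2 = 0) (hy : ContinuousAt y p)
    (hG : ContinuousAt G p) (hΨ : ContDiffAt ℝ 1 Ψ (G p)) (hs : ContinuousAt s p)
    (hGv : ∀ q, pv G q = (2 * q.2) • (a + (q.2 * s q) • c))
    (hyG : ∀ᶠ q in 𝓝 p, dot3 (y q) (fderiv ℝ Ψ (G q) (pv G q)) = 0) :
    dot3 (y p) (fderiv ℝ Ψ (G p) a) = 0 := by
  have hT : ContinuousAt (fun q => fderiv ℝ Ψ (G q)) p :=
    (hΨ.continuousAt_fderiv one_ne_zero).comp hG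
  have hT' : ContinuousAt (fun q => fderiv ℝ Ψ (G q) (a + (q.2 * s q) • c)) p :=
    hT.clm_apply (by fun_prop)
  have h0 := pv_eq_of_eventuallyEq_snd_smul (F := fun _ => (0 : ℝ))
    (Q := fun q => 2 * dot3 (y q) (fderiv ℝ Ψ (G q) (a + (q.2 * s q) • c))) hp
    (differentiableAt_const _) (continuousAt_const.mul (continuousAt_dot3 hy hT'))
    (hyG.mono fun q hq => by
      rw [hGv, map_smul, dot3_smul_right] at hq
      rw [smul_eq_mul, ← hq]
      ring)
  simpa [pv, hp] using h0.symm

/-- On the axis `G_v = 0`, so there `dΨ` has no derivative in the direction `v`. -/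
theorem dot3_pv_fderiv_add_eq_zero (hp : p.2 = 0) (hy : DifferentiableAt ℝ y p)
    (hG : DifferentiableAt ℝ G p) (hΨ : ContDiffAt ℝ 2 Ψ (G p)) (hs : ContinuousAt s p)
    (hGv : ∀ q, pv G q = (2 * q.2) • (a + (q.2 * s q) • c))
    (hyG : ∀ᶠ q in 𝓝 p, dot3 (y q) (fderiv ℝ Ψ (G q) (pv G q)) = 0)
    (hya : ∀ᶠ q in 𝓝 p, q.2 = 0 → dot3 (y q) (fderiv ℝ Ψ (G q) a) = 0) :
    dot3 (pv y p) (fderiv ℝ Ψ (G p) a) + s p * dot3 (y p) (fderiv ℝ Ψ (G p) c) = 0 := by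
  have hT : HasFDerivAt (fun q => fderiv ℝ Ψ (G q)) _ p :=
    ((hΨ.fderiv_right (m := 1) (by norm_num)).differentiableAt one_ne_zero).hasFDerivAt.comp p
      hG.hasFDerivAt
  have hTa := hT.clm_apply (hasFDerivAt_const a p)
  have hTc := (hT.clm_apply (hasFDerivAt_const c p)).continuousAt
  have hpv := pv_eq_of_eventuallyEq_snd_smul (F := fun q => dot3 (y q) (fderiv ℝ Ψ (G q) a))
    (Q := fun q => -(s q * dot3 (y q) (fderiv ℝ Ψ (G q) c))) hp
    (hasFDerivAt_dot3 hy.hasFDerivAt hTa).choose_spec.1.differentiableAt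
    (hs.mul (continuousAt_dot3 hy.continuousAt hTc)).neg (by
      filter_upwards [hyG, hya] with q hq hqa
      by_cases hq₂ : q.2 = 0
      · rw [hqa hq₂, hq₂, zero_smul]
      · simp only [hGv, map_smul, map_add, dot3_smul_right, dot3_add_right] at hq
        have hq' := (mul_eq_zero.1 hq).resolve_left (mul_ne_zero two_ne_zero hq₂)
        rw [smul_eq_mul]
        linear_combination hq')
  have hGp : fderiv ℝ G p (0, 1) = 0 := by simpa [pv, hp] using hGv p
  have hTa₀ : fderiv ℝ (fun q => fderiv ℝ Ψ (G q) a) p (0, 1) = 0 := by simp [hTa.fderiv, hGp]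
  rw [pv, fderiv_dot3 hy hTa.differentiableAt, hTa₀, ← pv, dot3_zero_right] at hpv
  linear_combination hpv

end NormalCovector

/-- A null field together with a smooth normal covector field `x` of the map, orthogonal to the
direction field `ν`, whose derivative along the null field has `ν`-component `v μ`. -/
structure IsNullFrame (C ν : ℝ × ℝ → R3) (σ : ℝ × ℝ → ℝ) (V : ℝ × ℝ → ℝ × ℝ)
    (x : ℝ × ℝ → R3) (μ : ℝ × ℝ → ℝ) : Prop extends IsNullField C ν σ V where
  contDiff_normal : ContDiff ℝ ∞ x
  continuous_coeff : Continuous μ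
  dot3_normal_fderiv (p w : ℝ × ℝ) : dot3 (x p) (fderiv ℝ C p w) = 0
  dot3_normal_direction (p : ℝ × ℝ) : dot3 (x p) (ν p) = 0
  dot3_fderiv_normal (p : ℝ × ℝ) : dot3 (fderiv ℝ x p (V p)) (ν p) = p.2 * μ p
  det3_ne_zero : det3 (pu C 0) (ν 0) (x 0) ≠ 0
  coeff_ne_zero : μ 0 ≠ 0

namespace IsNullFrame

variable {C ν x : ℝ × ℝ → R3} {σ μ : ℝ × ℝ → ℝ} {V : ℝ × ℝ → ℝ × ℝ}

theorem eq_smul_of_fderiv_eq_zero (h : IsNullFrame C ν σ V x μ) {q w : ℝ × ℝ}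
    (hV : (V q).2 ≠ 0) (hdet : det3 (pu C q) (ν q) (x q) ≠ 0) (hw : fderiv ℝ C q w = 0) :
    w = (w.2 / (V q).2) • V q ∧ w.2 * σ q = 0 := by
  have hw₂ : w.2 - w.2 / (V q).2 * (V q).2 = 0 := by rw [div_mul_cancel₀ _ hV, sub_self]
  obtain ⟨h₁, h₂⟩ := eq_zero_of_smul_add_smul_eq_zero hdet
    (s := (w - (w.2 / (V q).2) • V q).1) (t := w.2 / (V q).2 * σ q) (by
      have hd := fderiv_apply_eq_pu_add_pv C q (w - (w.2 / (V q).2) • V q)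
      rw [map_sub, map_smul, hw, h.fderiv_apply, Prod.snd_sub, Prod.smul_snd, smul_eq_mul, hw₂,
        zero_smul, add_zero, zero_sub] at hd
      rw [← hd, smul_smul, neg_add_cancel])
  refine ⟨sub_eq_zero.1 (Prod.ext h₁ hw₂), ?_⟩
  rw [div_mul_eq_mul_div] at h₂
  exact (div_eq_zero_iff.1 h₂).resolve_right hV

theorem snd_ne_zero_of_fderiv_eq_zero (h : IsNullFrame C ν σ V x μ) {w : ℝ × ℝ}
    (hw : fderiv ℝ C 0 w = 0) (hw₀ : w ≠ 0) : w.2 ≠ 0 := fun hw₂ => hw₀ <| by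
  rw [(h.eq_smul_of_fderiv_eq_zero h.field_snd h.det3_ne_zero hw).1, hw₂, zero_div, zero_smul]

theorem det3_mul_dot3_fderiv (h : IsNullFrame C ν σ V x μ) {q w : ℝ × ℝ} {a : R3}
    (hV : (V q).2 ≠ 0) (hdet : det3 (pu C q) (ν q) (x q) ≠ 0) (hw : fderiv ℝ C q w = 0)
    (ha : dot3 (x q) a = 0) : det3 (pu C q) (ν q) (x q) * dot3 (fderiv ℝ x q w) a =
      det3 (pu C q) a (x q) * (w.2 / (V q).2 * (q.2 * μ q)) := by
  have hCu : dot3 (fderiv ℝ x q w) (pu C q) = 0 := by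
    rw [pu, dot3_fderiv_fderiv_comm (h.contDiff_normal.differentiable (by simp) q)
      h.contDiff_map h.dot3_normal_fderiv, hw, dot3_zero_right]
  rw [det3_mul_dot3_of_orthogonal (a := pu C q) (h.dot3_normal_fderiv q _)
    (h.dot3_normal_direction q) ha hCu]
  conv_lhs => rw [(h.eq_smul_of_fderiv_eq_zero hV hdet hw).1]
  rw [map_smul, dot3_smul_left, h.dot3_fderiv_normal]

theorem continuous_det3_frame (h : IsNullFrame C ν σ V x μ) :
    Continuous fun q => det3 (pu C q) (ν q) (x q) :=
  continuous_iff_continuousAt.2 fun _ => continuousAt_det3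
    (contDiff_pu h.contDiff_map).continuous.continuousAt
    h.contDiff_direction.continuous.continuousAt h.contDiff_normal.continuous.continuousAt

theorem eventually_nondegenerate (h : IsNullFrame C ν σ V x μ) :
    ∀ᶠ q in 𝓝 0, (V q).2 ≠ 0 ∧ det3 (pu C q) (ν q) (x q) ≠ 0 :=
  (h.contDiff_field.continuous.snd.continuousAt.eventually_ne h.field_snd).and
    (h.continuous_det3_frame.continuousAt.eventually_ne h.det3_ne_zero)

theorem det3_ne_zero_and_dot3_ne_zero (h : IsNullFrame C ν σ V x μ) {T : R3 →L[ℝ] R3} {s : ℝ}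
    (hT : ∀ w, T w = 0 → w = 0) (hT₀ : T (Pi.single 0 1) = s • pu C 0)
    (hT₁ : dot3 (x 0) (T (Pi.single 1 1)) = 0) :
    det3 (pu C 0) (T (Pi.single 1 1)) (x 0) ≠ 0 ∧ dot3 (x 0) (T (Pi.single 2 1)) ≠ 0 := by
  have hx : dot3 (x 0) (x 0) ≠ 0 :=
    mt (dot3_self_eq_zero _).1 (((det3_ne_zero_iff _ _ _).1 h.det3_ne_zero).ne_zero 2)
  have hxT₀ : dot3 (x 0) (s • pu C 0) = 0 := by
    rw [dot3_smul_right, pu, h.dot3_normal_fderiv, mul_zero]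
  have hne := mul_ne_zero hx (det3_map_single_ne_zero hT)
  rw [hT₀, dot3_self_mul_det3_of_orthogonal hxT₀ hT₁, det3_smul_left] at hne
  exact ⟨right_ne_zero_of_mul (left_ne_zero_of_mul hne), right_ne_zero_of_mul hne⟩

section Transport

variable {b : ℝ × ℝ → ℝ} {φ : ℝ × ℝ → ℝ × ℝ} {Ψ : R3 → R3}

theorem eventually_axis_relation (h : IsNullFrame C ν σ V x μ) (hb : ContDiff ℝ ∞ b)
    (hφ : ContDiffAt ℝ ∞ φ 0) (hΨ : ContDiffAt ℝ ∞ Ψ (cuspidalGerm b 0))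
    (hE : ∀ᶠ p in 𝓝 0, C (φ p) = Ψ (cuspidalGerm b p)) :
    ∀ᶠ p in 𝓝 0, p.2 = 0 →
      fderiv ℝ C (φ p) (pv φ p) = 0 ∧
      dot3 (x (φ p)) (fderiv ℝ Ψ (cuspidalGerm b p) (Pi.single 1 1)) = 0 ∧
      dot3 (fderiv ℝ x (φ p) (pv φ p)) (fderiv ℝ Ψ (cuspidalGerm b p) (Pi.single 1 1)) +
        3 / 2 * b p * dot3 (x (φ p)) (fderiv ℝ Ψ (cuspidalGerm b p) (Pi.single 2 1)) = 0 := by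
  have hG := contDiff_cuspidalGerm hb
  have hx := h.contDiff_normal.differentiable (by simp)
  have hs : Continuous fun q : ℝ × ℝ => 3 / 2 * b (q.1, q.2 ^ 2) +
      q.2 ^ 2 * pv b (q.1, q.2 ^ 2) := by
    have hbv := (contDiff_pv hb).continuous
    have hbc := hb.continuous
    fun_prop
  have hchain := eventually_fderiv_comp_eq h.contDiff_map hG hφ hΨ hE
  have hφ' := (hφ.of_le (m := 1) ENat.LEInfty.out).eventually (by simp)
  have hΨ' := hG.continuous.continuousAt.eventually
    ((hΨ.of_le (m := 2) ENat.LEInfty.out).eventually (by simp))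
  have hyG : ∀ᶠ q in 𝓝 0, dot3 (x (φ q))
      (fderiv ℝ Ψ (cuspidalGerm b q) (pv (cuspidalGerm b) q)) = 0 :=
    hchain.mono fun q hq => by rw [pv, ← hq, h.dot3_normal_fderiv]
  have hya : ∀ᶠ q in 𝓝 0, q.2 = 0 →
      dot3 (x (φ q)) (fderiv ℝ Ψ (cuspidalGerm b q) (Pi.single 1 1)) = 0 := by
    filter_upwards [hyG.eventually_nhds, hφ', hΨ'] with q hq hφq hΨq hq₂
    exact dot3_fderiv_eq_zero_of_snd_eq_zero hq₂ ((hx _).continuousAt.comp hφq.continuousAt)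
      hG.continuous.continuousAt (hΨq.of_le one_le_two) hs.continuousAt (pv_cuspidalGerm hb) hq
  filter_upwards [hchain, hyG.eventually_nhds, hya.eventually_nhds, hφ', hΨ']
    with p hcp hyGp hyap hφp hΨp hp
  have hφd := hφp.differentiableAt one_ne_zero
  have hxφ := (hx (φ p)).hasFDerivAt.comp p hφd.hasFDerivAt
  have hrel := dot3_pv_fderiv_add_eq_zero hp hxφ.differentiableAt
    (hG.differentiable (by simp) p) hΨp hs.continuousAt (pv_cuspidalGerm hb) hyGp hyap
  have hp₀ : (p.1, (0 : ℝ)) = p := Prod.ext rfl hp.symm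
  rw [pv, hxφ.fderiv, hp, zero_pow two_ne_zero, zero_mul, add_zero, hp₀] at hrel
  refine ⟨?_, hyap.self_of_nhds hp, hrel⟩
  rw [pv, hcp, ← pv, pv_cuspidalGerm hb, hp, mul_zero, zero_smul, map_zero]

theorem axis_nondegenerate (h : IsNullFrame C ν σ V x μ) (hb : ContDiff ℝ ∞ b)
    (hφ : ContDiffAt ℝ ∞ φ 0) (hφ₀ : φ 0 = 0) (hφ' : ∀ w, fderiv ℝ φ 0 w = 0 → w = 0)
    (hΨ : ContDiffAt ℝ ∞ Ψ (cuspidalGerm b 0))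
    (hΨ' : ∀ w, fderiv ℝ Ψ (cuspidalGerm b 0) w = 0 → w = 0)
    (hE : ∀ᶠ p in 𝓝 0, C (φ p) = Ψ (cuspidalGerm b p)) :
    (pv φ 0).2 ≠ 0 ∧
      det3 (pu C 0) (fderiv ℝ Ψ (cuspidalGerm b 0) (Pi.single 1 1)) (x 0) ≠ 0 ∧
      dot3 (x 0) (fderiv ℝ Ψ (cuspidalGerm b 0) (Pi.single 2 1)) ≠ 0 := by
  have hchain := (eventually_fderiv_comp_eq h.contDiff_map (contDiff_cuspidalGerm hb) hφ hΨ
    hE).self_of_nhds (1, 0)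
  obtain ⟨hker, hx₁, -⟩ := (h.eventually_axis_relation hb hφ hΨ hE).self_of_nhds rfl
  rw [hφ₀] at hchain hker hx₁
  rw [fderiv_apply_eq_pu_add_pv C, h.pv_map_zero, smul_zero, add_zero, ← pu, ← pu,
    pu_cuspidalGerm_zero hb] at hchain
  refine ⟨h.snd_ne_zero_of_fderiv_eq_zero hker fun hφv => ?_,
    h.det3_ne_zero_and_dot3_ne_zero hΨ' hchain.symm hx₁⟩
  simpa using hφ' (0, 1) hφv

theorem eventually_axis_mul_eq (h : IsNullFrame C ν σ V x μ) (hb : ContDiff ℝ ∞ b)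
    (hφ : ContDiffAt ℝ ∞ φ 0) (hφ₀ : φ 0 = 0) (hφv : (pv φ 0).2 ≠ 0)
    (hΨ : ContDiffAt ℝ ∞ Ψ (cuspidalGerm b 0))
    (hE : ∀ᶠ p in 𝓝 0, C (φ p) = Ψ (cuspidalGerm b p)) :
    ∀ᶠ p in 𝓝 0, p.2 = 0 → σ (φ p) = 0 ∧
      b p * (3 / 2 * dot3 (x (φ p)) (fderiv ℝ Ψ (cuspidalGerm b p) (Pi.single 2 1)) *
        det3 (pu C (φ p)) (ν (φ p)) (x (φ p))) =
      -(det3 (pu C (φ p)) (fderiv ℝ Ψ (cuspidalGerm b p) (Pi.single 1 1)) (x (φ p)) *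
        ((pv φ p).2 / (V (φ p)).2 * μ (φ p))) * (φ p).2 := by
  have hφv' : ContinuousAt (fun p => (pv φ p).2) 0 :=
    ((hφ.continuousAt_fderiv (by simp)).clm_apply continuousAt_const).snd
  filter_upwards [h.eventually_axis_relation hb hφ hΨ hE, hφv'.eventually_ne hφv,
    (hφ₀ ▸ hφ.continuousAt.tendsto).eventually h.eventually_nondegenerate]
    with p hp hφp ⟨hVp, hdetp⟩ hp₂
  obtain ⟨hker, hx₁, hrel⟩ := hp hp₂
  have hσ := (h.eq_smul_of_fderiv_eq_zero hVp hdetp hker).2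
  have hmul := h.det3_mul_dot3_fderiv hVp hdetp hker hx₁
  refine ⟨(mul_eq_zero.1 hσ).resolve_left hφp, ?_⟩
  linear_combination det3 (pu C (φ p)) (ν (φ p)) (x (φ p)) * hrel - hmul

theorem exists_eq_mul_snd (h : IsNullFrame C ν σ V x μ) (hb : ContDiff ℝ ∞ b)
    (hφ : ContDiffAt ℝ ∞ φ 0) (hφ₀ : φ 0 = 0) (hφ' : ∀ w, fderiv ℝ φ 0 w = 0 → w = 0)
    (hΨ : ContDiffAt ℝ ∞ Ψ (cuspidalGerm b 0))
    (hΨ' : ∀ w, fderiv ℝ Ψ (cuspidalGerm b 0) w = 0 → w = 0)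
    (hE : ∀ᶠ p in 𝓝 0, C (φ p) = Ψ (cuspidalGerm b p)) :
    ∃ m : ℝ × ℝ → ℝ, ContinuousAt m 0 ∧ m 0 ≠ 0 ∧
      ∀ᶠ p in 𝓝 0, p.2 = 0 → σ (φ p) = 0 ∧ b p = m p * (φ p).2 := by
  obtain ⟨hφv, hdet, hdot⟩ := h.axis_nondegenerate hb hφ hφ₀ hφ' hΨ hΨ' hE
  have hcomp {Y : Type} [TopologicalSpace Y] {F : ℝ × ℝ → Y} (hF : Continuous F) :
      ContinuousAt (fun p => F (φ p)) 0 := hF.continuousAt.comp hφ.continuousAt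
  have hT (a : R3) : ContinuousAt (fun p => fderiv ℝ Ψ (cuspidalGerm b p) a) 0 :=
    ((hΨ.continuousAt_fderiv (by simp)).comp
      (contDiff_cuspidalGerm hb).continuous.continuousAt).clm_apply continuousAt_const
  have hx := hcomp h.contDiff_normal.continuous
  have hφv' : ContinuousAt (fun p => (pv φ p).2) 0 :=
    ((hφ.continuousAt_fderiv (by simp)).clm_apply continuousAt_const).snd
  let P (p : ℝ × ℝ) : ℝ :=
    -(det3 (pu C (φ p)) (fderiv ℝ Ψ (cuspidalGerm b p) (Pi.single 1 1)) (x (φ p)) *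
      ((pv φ p).2 / (V (φ p)).2 * μ (φ p)))
  let Q (p : ℝ × ℝ) : ℝ :=
    3 / 2 * dot3 (x (φ p)) (fderiv ℝ Ψ (cuspidalGerm b p) (Pi.single 2 1)) *
      det3 (pu C (φ p)) (ν (φ p)) (x (φ p))
  have hP : ContinuousAt P 0 :=
    ((continuousAt_det3 (hcomp (contDiff_pu h.contDiff_map).continuous) (hT _) hx).mul
      ((hφv'.div₀ (hcomp h.contDiff_field.continuous.snd) (hφ₀.symm ▸ h.field_snd)).mul
        (hcomp h.continuous_coeff))).neg
  have hQ : ContinuousAt Q 0 := (continuousAt_const.mul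
    (continuousAt_dot3 hx (hT _))).mul (hcomp h.continuous_det3_frame)
  have hP₀ : P 0 ≠ 0 := by
    simp only [P, hφ₀]
    exact neg_ne_zero.2 (mul_ne_zero hdet
      (mul_ne_zero (div_ne_zero hφv h.field_snd) h.coeff_ne_zero))
  have hQ₀ : Q 0 ≠ 0 := by
    simp only [Q, hφ₀]
    exact mul_ne_zero (mul_ne_zero (by norm_num) hdot) h.det3_ne_zero
  refine ⟨fun p => P p / Q p, hP.div₀ hQ hQ₀, div_ne_zero hP₀ hQ₀, ?_⟩
  filter_upwards [h.eventually_axis_mul_eq hb hφ hφ₀ hφv hΨ hE, hQ.eventually_ne hQ₀]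
    with p hp hQp hp₂
  rw [div_mul_eq_mul_div, eq_div_iff hQp]
  exact hp hp₂

end Transport

theorem eq_zero_and_pu_ne_zero_iff (h : IsNullFrame C ν σ V x μ) {b : ℝ × ℝ → ℝ}
    (hb : ContDiff ℝ ∞ b) (hE : AEquivAt C 0 (cuspidalGerm b) 0) :
    b 0 = 0 ∧ (pu b 0 ≠ 0 ↔ pu σ 0 ≠ 0) := by
  obtain ⟨φ, Ψ, hφ, hφ₀, hΨ, hφ', hΨ', hE⟩ :=
    hE.exists_eventually_eq h.contDiff_map.continuous.continuousAt
  obtain ⟨m, hm, hm₀, haxis⟩ := h.exists_eq_mul_snd hb hφ hφ₀ hφ' hΨ hΨ' hE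
  have hline : HasDerivAt (fun u : ℝ => (u, (0 : ℝ))) (1, 0) 0 :=
    (hasDerivAt_id 0).prodMk (hasDerivAt_const 0 0)
  have hu : ∀ᶠ u : ℝ in 𝓝 0, σ (φ (u, 0)) = 0 ∧ b (u, 0) = m (u, 0) * (φ (u, 0)).2 :=
    (hline.continuousAt.tendsto.eventually haxis).mono fun u hu => hu rfl
  have hφu : HasDerivAt (fun u : ℝ => φ (u, 0)) (pu φ 0) 0 :=
    hasDerivAt_axis (hφ.differentiableAt (by simp))
  have hφ₂ : (φ (0, 0)).2 = 0 := congrArg Prod.snd hφ₀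
  have hbu : HasDerivAt (fun u : ℝ => b (u, 0)) (pu b 0) 0 :=
    hasDerivAt_axis (hb.differentiable (by simp) _)
  have hpub : pu b 0 = m 0 * (pu φ 0).2 := hbu.unique
    ((hasDerivAt_mul_of_eq_zero (m := fun u => m (u, 0))
      (ContinuousAt.comp (g := m) (f := fun u : ℝ => (u, (0 : ℝ))) hm hline.continuousAt) hφu.snd
      hφ₂).congr_of_eventuallyEq (hu.mono fun u hu => hu.2))
  have hpuσ : (pu φ 0).1 * pu σ 0 + (pu φ 0).2 * pv σ 0 = 0 := by
    have hσu := (h.contDiff_factor.differentiable (by simp) _).hasFDerivAt.comp_hasDerivAt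
      (0 : ℝ) hφu
    have h0 := hσu.unique ((hasDerivAt_const 0 0).congr_of_eventuallyEq (hu.mono fun u hu => hu.1))
    rw [fderiv_apply_eq_pu_add_pv, show φ (0, 0) = 0 from hφ₀] at h0
    exact h0
  refine ⟨hu.self_of_nhds.2.trans (by rw [hφ₂, mul_zero]), ?_⟩
  rw [hpub, mul_ne_zero_iff, and_iff_right hm₀]
  have hσv := h.pv_factor
  refine ⟨fun hφu₂ hσu => ?_, fun hσu hφu₂ => ?_⟩
  · rw [hσu, mul_zero, zero_add] at hpuσ
    exact mul_ne_zero hφu₂ hσv hpuσ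
  · rw [hφu₂, zero_mul, add_zero] at hpuσ
    have hpu : pu φ 0 = 0 := Prod.ext ((mul_eq_zero.1 hpuσ).resolve_right hσu) hφu₂
    simpa using hφ' (1, 0) hpu

theorem aequivAt_cuspidalGerm_fst_iff (h : IsNullFrame C ν σ V x μ) :
    AEquivAt C 0 (cuspidalGerm Prod.fst) 0 ↔ pu σ 0 ≠ 0 := by
  have hpu : pu (Prod.fst : ℝ × ℝ → ℝ) 0 ≠ 0 := by
    simp [pu, fderiv_fst]
  refine ⟨fun hE => (h.eq_zero_and_pu_ne_zero_iff contDiff_fst hE).2.1 hpu, fun hσ => ?_⟩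
  obtain ⟨b, hb, hE⟩ := h.toIsNullField.exists_aequivAt_cuspidalGerm
    ((det3_ne_zero_iff _ _ _).1 h.det3_ne_zero)
  obtain ⟨hb₀, hbu⟩ := h.eq_zero_and_pu_ne_zero_iff hb hE
  exact hE.trans (aequivAt_cuspidalGerm_fst hb hb₀ (hbu.2 hσ))

end IsNullFrame

end Criterion

namespace AdaptedPureFrontal

variable {f ν h ν₁ : ℝ × ℝ → R3} {ε : ℝ}

section FundamentalForms

theorem contDiff_Et (H : AdaptedPureFrontal f ν h ν₁) : ContDiff ℝ ∞ (Et f) :=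
  contDiff_dot3 (contDiff_pu H.smooth_f) (contDiff_pu H.smooth_f)

theorem contDiff_Ft (H : AdaptedPureFrontal f ν h ν₁) : ContDiff ℝ ∞ (Ft f h) :=
  contDiff_dot3 (contDiff_pu H.smooth_f) H.smooth_h

theorem contDiff_Gt (H : AdaptedPureFrontal f ν h ν₁) : ContDiff ℝ ∞ (Gt h) :=
  contDiff_dot3 H.smooth_h H.smooth_h

theorem contDiff_Lt (H : AdaptedPureFrontal f ν h ν₁) : ContDiff ℝ ∞ (Lt f ν) :=
  (contDiff_dot3 (contDiff_pu H.smooth_f) (contDiff_pu H.smooth_ν)).neg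

theorem contDiff_Mt (H : AdaptedPureFrontal f ν h ν₁) : ContDiff ℝ ∞ (Mt h ν) :=
  (contDiff_dot3 H.smooth_h (contDiff_pu H.smooth_ν)).neg

theorem contDiff_Nt1 (H : AdaptedPureFrontal f ν h ν₁) : ContDiff ℝ ∞ (Nt1 h ν₁) :=
  (contDiff_dot3 H.smooth_h H.smooth_ν₁).neg

theorem dot3_h_ν (H : AdaptedPureFrontal f ν h ν₁) (p : ℝ × ℝ) : dot3 (h p) (ν p) = 0 := by
  refine congrFun (eq_of_snd_smul_eq (contDiff_dot3 H.smooth_h H.smooth_ν).continuous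
    (continuous_const (y := (0 : ℝ))) fun q => ?_) p
  rw [smul_eq_mul, ← dot3_smul_left, ← H.fv_eq, H.orth_fv_ν, smul_zero]

theorem dot3_ν_fderiv_ν (H : AdaptedPureFrontal f ν h ν₁) (p w : ℝ × ℝ) :
    dot3 (ν p) (fderiv ℝ ν p w) = 0 := by
  have hν := H.smooth_ν.differentiable (by simp) p
  have hd := dot3_fderiv_add_eq_zero hν hν H.unit_ν w
  rw [dot3_comm (fderiv ℝ ν p w)] at hd
  linarith

theorem dot3_ν_ν₁ (H : AdaptedPureFrontal f ν h ν₁) (p : ℝ × ℝ) : dot3 (ν p) (ν₁ p) = 0 := by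
  refine congrFun (eq_of_snd_smul_eq (contDiff_dot3 H.smooth_ν H.smooth_ν₁).continuous
    (continuous_const (y := (0 : ℝ))) fun q => ?_) p
  rw [smul_eq_mul, ← dot3_smul_right, ← H.νv_eq, pv, H.dot3_ν_fderiv_ν, smul_zero]

/-- Symmetry of the second fundamental form, divided by `v`. -/
theorem dot3_pu_f_ν₁ (H : AdaptedPureFrontal f ν h ν₁) (p : ℝ × ℝ) :
    dot3 (pu f p) (ν₁ p) = -Mt h ν p := by
  refine congrFun (eq_of_snd_smul_eq
    (contDiff_dot3 (contDiff_pu H.smooth_f) H.smooth_ν₁).continuous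
    H.contDiff_Mt.neg.continuous fun q => ?_) p
  have hν := H.smooth_ν.differentiable (by simp) q
  have hfu := dot3_fderiv_add_eq_zero ((contDiff_pu H.smooth_f).differentiable (by simp) q) hν
    H.orth_fu_ν (0, 1)
  have hh := dot3_fderiv_add_eq_zero (H.smooth_h.differentiable (by simp) q) hν H.dot3_h_ν (1, 0)
  rw [← pv, ← pv, pv_pu_of_pv_eq_snd_smul H.smooth_f H.smooth_h H.fv_eq, H.νv_eq, dot3_smul_left,
    dot3_smul_right] at hfu
  rw [← pu, ← pu] at hh
  rw [smul_eq_mul, smul_eq_mul, Mt, neg_neg]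
  linear_combination hfu - q.2 * hh

theorem gram_ne_zero (H : AdaptedPureFrontal f ν h ν₁) (p : ℝ × ℝ) :
    Et f p * Gt h p - Ft f h p ^ 2 ≠ 0 := by
  have hdet := (det3_ne_zero_iff _ _ _).2 (H.indep p)
  convert mul_ne_zero hdet hdet using 1
  rw [det3_mul_det3, H.orth_fu_ν, H.dot3_h_ν, H.unit_ν, dot3_comm (h p) (pu f p), Et, Ft, Gt]
  ring

theorem Et_axis (H : AdaptedPureFrontal f ν h ν₁) (u : ℝ) : Et f (u, 0) = 1 := H.adapted_fu u

theorem Ft_axis (H : AdaptedPureFrontal f ν h ν₁) (u : ℝ) : Ft f h (u, 0) = 0 := H.adapted_fu_h u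

theorem Gt_axis (H : AdaptedPureFrontal f ν h ν₁) (u : ℝ) : Gt h (u, 0) = 1 := H.adapted_h u

end FundamentalForms

section PrincipalCurvature

theorem contDiff_Kg (H : AdaptedPureFrontal f ν h ν₁) : ContDiff ℝ ∞ (Kg f ν h ν₁) :=
  ((H.contDiff_Lt.mul H.contDiff_Nt1).sub (H.contDiff_Mt.pow 2)).div
    ((H.contDiff_Et.mul H.contDiff_Gt).sub (H.contDiff_Ft.pow 2)) H.gram_ne_zero

theorem contDiff_Hm (H : AdaptedPureFrontal f ν h ν₁) : ContDiff ℝ ∞ (Hm f ν h ν₁) :=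
  (((H.contDiff_Et.mul H.contDiff_Nt1).sub ((contDiff_const.mul H.contDiff_Ft).mul
    H.contDiff_Mt)).add (H.contDiff_Gt.mul H.contDiff_Lt)).div
    (contDiff_const.mul ((H.contDiff_Et.mul H.contDiff_Gt).sub (H.contDiff_Ft.pow 2)))
    fun p => mul_ne_zero two_ne_zero (H.gram_ne_zero p)

theorem contDiff_kap (H : AdaptedPureFrontal f ν h ν₁)
    (hHK : ∀ p, Hm f ν h ν₁ p ^ 2 - Kg f ν h ν₁ p > 0) (ε : ℝ) :
    ContDiff ℝ ∞ (kap f ν h ν₁ ε) :=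
  H.contDiff_Hm.add (contDiff_const.mul
    (((H.contDiff_Hm.pow 2).sub H.contDiff_Kg).sqrt fun p => (hHK p).ne'))

/-- The characteristic equation of the shape operator, multiplied by `ẼG̃ - F̃²`. -/
theorem kap_characteristic (H : AdaptedPureFrontal f ν h ν₁) (hε : ε = 1 ∨ ε = -1) {p : ℝ × ℝ}
    (hHK : Hm f ν h ν₁ p ^ 2 - Kg f ν h ν₁ p > 0) :
    (Lt f ν p - kap f ν h ν₁ ε p * Et f p) * (Nt1 h ν₁ p - kap f ν h ν₁ ε p * Gt h p) =
      (Mt h ν p - kap f ν h ν₁ ε p * Ft f h p) ^ 2 := by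
  have hε₂ : ε ^ 2 = 1 := sq_eq_one_iff.2 hε
  have hsqrt := Real.sq_sqrt hHK.le
  have hgram := H.gram_ne_zero p
  have hH : Hm f ν h ν₁ p * (2 * (Et f p * Gt h p - Ft f h p ^ 2)) =
      Et f p * Nt1 h ν₁ p - 2 * Ft f h p * Mt h ν p + Gt h p * Lt f ν p :=
    div_mul_cancel₀ _ (mul_ne_zero two_ne_zero hgram)
  have hK : Kg f ν h ν₁ p * (Et f p * Gt h p - Ft f h p ^ 2) =
      Lt f ν p * Nt1 h ν₁ p - Mt h ν p ^ 2 := div_mul_cancel₀ _ hgram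
  have hroot : kap f ν h ν₁ ε p ^ 2 - 2 * Hm f ν h ν₁ p * kap f ν h ν₁ ε p +
      Kg f ν h ν₁ p = 0 := by
    rw [kap]
    linear_combination Real.sqrt (Hm f ν h ν₁ p ^ 2 - Kg f ν h ν₁ p) ^ 2 * hε₂ + hsqrt
  linear_combination (Et f p * Gt h p - Ft f h p ^ 2) * hroot - hK + kap f ν h ν₁ ε p * hH

theorem kap_characteristic_axis (H : AdaptedPureFrontal f ν h ν₁) (hε : ε = 1 ∨ ε = -1) {u : ℝ}
    (hHK : Hm f ν h ν₁ (u, 0) ^ 2 - Kg f ν h ν₁ (u, 0) > 0) :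
    (Lt f ν (u, 0) - kap f ν h ν₁ ε (u, 0)) * (Nt1 h ν₁ (u, 0) - kap f ν h ν₁ ε (u, 0)) =
      Mt h ν (u, 0) ^ 2 := by
  simpa only [H.Et_axis, H.Ft_axis, H.Gt_axis, mul_one, mul_zero, sub_zero]
    using H.kap_characteristic hε hHK

theorem Lt_sub_kap_ne_zero (H : AdaptedPureFrontal f ν h ν₁) (hε : ε = 1 ∨ ε = -1) {u : ℝ}
    (hHK : Hm f ν h ν₁ (u, 0) ^ 2 - Kg f ν h ν₁ (u, 0) > 0) (hkt : kt h ν u ≠ 0) :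
    Lt f ν (u, 0) - kap f ν h ν₁ ε (u, 0) ≠ 0 :=
  left_ne_zero_of_mul ((H.kap_characteristic_axis hε hHK).trans_ne (pow_ne_zero 2 hkt))

theorem kap_neg_axis (H : AdaptedPureFrontal f ν h ν₁) (ε u : ℝ) : kap f ν h ν₁ (-ε) (u, 0) =
    Nt1 h ν₁ (u, 0) + Lt f ν (u, 0) - kap f ν h ν₁ ε (u, 0) := by
  simp only [kap, Hm, H.Et_axis, H.Ft_axis, H.Gt_axis]
  ring

end PrincipalCurvature

end AdaptedPureFrontal

theorem kap_neg_sub_kap_ne_zero {f ν h ν₁ : ℝ × ℝ → R3} {ε : ℝ} (hε : ε = 1 ∨ ε = -1)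
    {p : ℝ × ℝ} (hHK : Hm f ν h ν₁ p ^ 2 - Kg f ν h ν₁ p > 0) :
    kap f ν h ν₁ (-ε) p - kap f ν h ν₁ ε p ≠ 0 := by
  have hε₀ : ε ≠ 0 := by rcases hε with rfl | rfl <;> norm_num
  have hsub : kap f ν h ν₁ (-ε) p - kap f ν h ν₁ ε p =
      -2 * ε * Real.sqrt (Hm f ν h ν₁ p ^ 2 - Kg f ν h ν₁ p) := by
    simp only [kap]
    ring
  rw [hsub]
  exact mul_ne_zero (mul_ne_zero (by norm_num) hε₀) (Real.sqrt_pos.2 hHK).ne'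

/-- The principal vector field `V = -v(M̃ - κF̃)∂_u + (L̃ - κẼ)∂_v`. -/
def principalField (f ν h ν₁ : ℝ × ℝ → R3) (ε : ℝ) (p : ℝ × ℝ) : ℝ × ℝ :=
  (V1c f ν h ν₁ ε p, V2c f ν h ν₁ ε p)

theorem VD_eq_fderiv {E : Type*} [NormedAddCommGroup E] [NormedSpace ℝ E]
    (f ν h ν₁ : ℝ × ℝ → R3) (ε : ℝ) (g : ℝ × ℝ → E) (p : ℝ × ℝ) :
    VD f ν h ν₁ ε g p = fderiv ℝ g p (principalField f ν h ν₁ ε p) :=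
  (fderiv_apply_eq_pu_add_pv g p (principalField f ν h ν₁ ε p)).symm

theorem dot3_xj_pu {f ν h ν₁ : ℝ × ℝ → R3} {ε : ℝ} {p : ℝ × ℝ}
    (hκ : kap f ν h ν₁ ε p ≠ 0) : dot3 (xj f ν h ν₁ ε p) (pu f p) +
      rho f ν h ν₁ ε p * dot3 (xj f ν h ν₁ ε p) (pu ν p) = 0 := by
  have hρ : rho f ν h ν₁ ε p * kap f ν h ν₁ ε p = 1 := inv_mul_cancel₀ hκ
  simp only [xj, dot3_add_left, dot3_smul_left]
  rw [dot3_comm (h p) (pu f p), ← Et, ← Ft, ← neg_neg (dot3 (pu f p) (pu ν p)), ← Lt,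
    ← neg_neg (dot3 (h p) (pu ν p)), ← Mt]
  linear_combination (Et f p * Mt h ν p - Ft f h p * Lt f ν p) * hρ

namespace AdaptedPureFrontal

variable {f ν h ν₁ : ℝ × ℝ → R3} {ε : ℝ}

section Smoothness

theorem contDiff_principalField (H : AdaptedPureFrontal f ν h ν₁)
    (hHK : ∀ p, Hm f ν h ν₁ p ^ 2 - Kg f ν h ν₁ p > 0) (ε : ℝ) :
    ContDiff ℝ ∞ (principalField f ν h ν₁ ε) :=
  (contDiff_snd.mul (H.contDiff_Mt.sub ((H.contDiff_kap hHK ε).mul H.contDiff_Ft))).neg.prodMk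
    (H.contDiff_Lt.sub ((H.contDiff_kap hHK ε).mul H.contDiff_Et))

theorem contDiff_VD (H : AdaptedPureFrontal f ν h ν₁)
    (hHK : ∀ p, Hm f ν h ν₁ p ^ 2 - Kg f ν h ν₁ p > 0) (ε : ℝ) {g : ℝ × ℝ → ℝ}
    (hg : ContDiff ℝ ∞ g) : ContDiff ℝ ∞ (VD f ν h ν₁ ε g) :=
  ((H.contDiff_principalField hHK ε).fst.smul (contDiff_pu hg)).add
    ((H.contDiff_principalField hHK ε).snd.smul (contDiff_pv hg))

theorem contDiff_xj (H : AdaptedPureFrontal f ν h ν₁)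
    (hHK : ∀ p, Hm f ν h ν₁ p ^ 2 - Kg f ν h ν₁ p > 0) (ε : ℝ) :
    ContDiff ℝ ∞ (xj f ν h ν₁ ε) :=
  ((H.contDiff_Mt.sub ((H.contDiff_kap hHK ε).mul H.contDiff_Ft)).neg.smul
    (contDiff_pu H.smooth_f)).add ((H.contDiff_principalField hHK ε).snd.smul H.smooth_h)

theorem contDiff_rho (H : AdaptedPureFrontal f ν h ν₁)
    (hHK : ∀ p, Hm f ν h ν₁ p ^ 2 - Kg f ν h ν₁ p > 0) (hκ : ∀ p, kap f ν h ν₁ ε p ≠ 0) :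
    ContDiff ℝ ∞ (rho f ν h ν₁ ε) :=
  (H.contDiff_kap hHK ε).inv hκ

theorem contDiff_Cf (H : AdaptedPureFrontal f ν h ν₁)
    (hHK : ∀ p, Hm f ν h ν₁ p ^ 2 - Kg f ν h ν₁ p > 0) (hκ : ∀ p, kap f ν h ν₁ ε p ≠ 0) :
    ContDiff ℝ ∞ (Cf f ν h ν₁ ε) :=
  H.smooth_f.add ((H.contDiff_rho hHK hκ).smul H.smooth_ν)

theorem differentiable_rc (H : AdaptedPureFrontal f ν h ν₁) :
    Differentiable ℝ (rc f ν h ν₁) := by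
  have hdiff {g : ℝ × ℝ → ℝ} (hg : ContDiff ℝ ∞ g) : Differentiable ℝ fun u : ℝ => g (u, 0) :=
    fun u => (hasDerivAt_axis (hg.differentiable (by simp) (u, 0))).differentiableAt
  exact (((hdiff (contDiff_pv H.contDiff_Nt1)).sub
    (((differentiable_const _).mul (hdiff (contDiff_pv H.contDiff_Ft))).mul
      (hdiff H.contDiff_Mt))).sub
    ((hdiff (contDiff_pv H.contDiff_Gt)).mul (hdiff H.contDiff_Nt1))).const_mul 24

end Smoothness

section FocalSurface

/-- Rodrigues' formula for the principal direction, divided by `v`. -/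
theorem rodrigues (H : AdaptedPureFrontal f ν h ν₁) (hε : ε = 1 ∨ ε = -1) {p : ℝ × ℝ}
    (hHK : Hm f ν h ν₁ p ^ 2 - Kg f ν h ν₁ p > 0) :
    (-(Mt h ν p - kap f ν h ν₁ ε p * Ft f h p)) • pu ν p +
      (Lt f ν p - kap f ν h ν₁ ε p * Et f p) • ν₁ p =
    -(kap f ν h ν₁ ε p • xj f ν h ν₁ ε p) := by
  have hchar := H.kap_characteristic hε hHK
  rw [← add_eq_zero_iff_eq_neg, xj]
  refine eq_zero_of_dot3_eq_zero (H.indep p) ?_ ?_ ?_ <;>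
    simp only [dot3_add_right, dot3_smul_right]
  · rw [H.dot3_pu_f_ν₁, Lt, Et, Ft]
    ring
  · rw [dot3_comm (h p) (pu f p), ← Ft, ← Gt, ← neg_neg (dot3 (h p) (pu ν p)), ← Mt,
      ← neg_neg (dot3 (h p) (ν₁ p)), ← Nt1]
    linear_combination -hchar
  · rw [pu, H.dot3_ν_fderiv_ν, H.dot3_ν_ν₁, dot3_comm (ν p), H.orth_fu_ν, dot3_comm (ν p),
      H.dot3_h_ν]
    ring

theorem fderiv_f_principalField (H : AdaptedPureFrontal f ν h ν₁) (ε : ℝ) (p : ℝ × ℝ) :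
    fderiv ℝ f p (principalField f ν h ν₁ ε p) = p.2 • xj f ν h ν₁ ε p := by
  rw [fderiv_apply_eq_pu_add_pv, H.fv_eq, principalField, V1c, V2c, xj]
  module

theorem fderiv_ν_principalField (H : AdaptedPureFrontal f ν h ν₁) (hε : ε = 1 ∨ ε = -1)
    {p : ℝ × ℝ} (hHK : Hm f ν h ν₁ p ^ 2 - Kg f ν h ν₁ p > 0) :
    fderiv ℝ ν p (principalField f ν h ν₁ ε p) =
      -((p.2 * kap f ν h ν₁ ε p) • xj f ν h ν₁ ε p) := by
  rw [fderiv_apply_eq_pu_add_pv, H.νv_eq, principalField, V1c, V2c, mul_smul, ← smul_neg,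
    ← H.rodrigues hε hHK]
  module

theorem fderiv_rho (H : AdaptedPureFrontal f ν h ν₁)
    (hHK : ∀ p, Hm f ν h ν₁ p ^ 2 - Kg f ν h ν₁ p > 0) {p : ℝ × ℝ}
    (hκ : kap f ν h ν₁ ε p ≠ 0) (w : ℝ × ℝ) :
    fderiv ℝ (rho f ν h ν₁ ε) p w =
      -(kap f ν h ν₁ ε p ^ 2)⁻¹ * fderiv ℝ (kap f ν h ν₁ ε) p w := by
  have hd : HasFDerivAt (rho f ν h ν₁ ε) _ p := (hasDerivAt_inv hκ).comp_hasFDerivAt p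
    ((H.contDiff_kap hHK ε).differentiable (by simp) p).hasFDerivAt
  rw [hd.fderiv, smul_apply, smul_eq_mul]

theorem VD_rho (H : AdaptedPureFrontal f ν h ν₁)
    (hHK : ∀ p, Hm f ν h ν₁ p ^ 2 - Kg f ν h ν₁ p > 0) {p : ℝ × ℝ}
    (hκ : kap f ν h ν₁ ε p ≠ 0) :
    VD f ν h ν₁ ε (rho f ν h ν₁ ε) p =
      -(kap f ν h ν₁ ε p ^ 2)⁻¹ * VD f ν h ν₁ ε (kap f ν h ν₁ ε) p := by
  rw [VD_eq_fderiv, VD_eq_fderiv, H.fderiv_rho hHK hκ]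

theorem pv_VD_rho (H : AdaptedPureFrontal f ν h ν₁)
    (hHK : ∀ p, Hm f ν h ν₁ p ^ 2 - Kg f ν h ν₁ p > 0) (hκ : ∀ p, kap f ν h ν₁ ε p ≠ 0)
    {p : ℝ × ℝ} (hp : VD f ν h ν₁ ε (kap f ν h ν₁ ε) p = 0) :
    pv (VD f ν h ν₁ ε (rho f ν h ν₁ ε)) p =
      -(kap f ν h ν₁ ε p ^ 2)⁻¹ * pv (VD f ν h ν₁ ε (kap f ν h ν₁ ε)) p := by
  have hk := H.contDiff_kap hHK ε
  have hVD : VD f ν h ν₁ ε (rho f ν h ν₁ ε) = fun q =>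
      -(kap f ν h ν₁ ε q ^ 2)⁻¹ * VD f ν h ν₁ ε (kap f ν h ν₁ ε) q :=
    funext fun q => H.VD_rho hHK (hκ q)
  have hinv : Differentiable ℝ fun q => -(kap f ν h ν₁ ε q ^ 2)⁻¹ :=
    (((hk.pow 2).inv fun q => pow_ne_zero 2 (hκ q)).neg).differentiable (by simp)
  rw [pv, hVD, fderiv_fun_mul (hinv p) ((H.contDiff_VD hHK ε hk).differentiable (by simp) p), hp,
    zero_smul, add_zero, smul_apply, smul_eq_mul, pv]

theorem fderiv_Cf (H : AdaptedPureFrontal f ν h ν₁)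
    (hHK : ∀ p, Hm f ν h ν₁ p ^ 2 - Kg f ν h ν₁ p > 0) (hκ : ∀ p, kap f ν h ν₁ ε p ≠ 0)
    (p w : ℝ × ℝ) :
    fderiv ℝ (Cf f ν h ν₁ ε) p w = fderiv ℝ f p w + rho f ν h ν₁ ε p • fderiv ℝ ν p w +
      fderiv ℝ (rho f ν h ν₁ ε) p w • ν p := by
  have hd : HasFDerivAt (Cf f ν h ν₁ ε) _ p :=
    (H.smooth_f.differentiable (by simp) p).hasFDerivAt.add
    (((H.contDiff_rho hHK hκ).differentiable (by simp) p).hasFDerivAt.smul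
      (H.smooth_ν.differentiable (by simp) p).hasFDerivAt)
  rw [hd.fderiv]
  simp [add_assoc]

theorem fderiv_Cf_principalField (H : AdaptedPureFrontal f ν h ν₁) (hε : ε = 1 ∨ ε = -1)
    (hHK : ∀ p, Hm f ν h ν₁ p ^ 2 - Kg f ν h ν₁ p > 0) (hκ : ∀ p, kap f ν h ν₁ ε p ≠ 0)
    (p : ℝ × ℝ) : fderiv ℝ (Cf f ν h ν₁ ε) p (principalField f ν h ν₁ ε p) =
      VD f ν h ν₁ ε (rho f ν h ν₁ ε) p • ν p := by
  have hρ : rho f ν h ν₁ ε p * (p.2 * kap f ν h ν₁ ε p) = p.2 := by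
    rw [mul_left_comm, rho, inv_mul_cancel₀ (hκ p), mul_one]
  rw [H.fderiv_Cf hHK hκ, H.fderiv_f_principalField, H.fderiv_ν_principalField hε (hHK p),
    smul_neg, smul_smul, hρ, add_neg_cancel, zero_add, VD_eq_fderiv]

theorem dot3_xj_ν (H : AdaptedPureFrontal f ν h ν₁) (ε : ℝ) (p : ℝ × ℝ) :
    dot3 (xj f ν h ν₁ ε p) (ν p) = 0 := by
  rw [xj, dot3_add_left, dot3_smul_left, dot3_smul_left, H.orth_fu_ν, H.dot3_h_ν, mul_zero,
    mul_zero, add_zero]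

theorem dot3_xj_h (H : AdaptedPureFrontal f ν h ν₁) (hε : ε = 1 ∨ ε = -1) {p : ℝ × ℝ}
    (hHK : Hm f ν h ν₁ p ^ 2 - Kg f ν h ν₁ p > 0) (hκ : kap f ν h ν₁ ε p ≠ 0) :
    dot3 (xj f ν h ν₁ ε p) (h p) + rho f ν h ν₁ ε p * dot3 (xj f ν h ν₁ ε p) (ν₁ p) = 0 := by
  have hρ : rho f ν h ν₁ ε p * kap f ν h ν₁ ε p = 1 := inv_mul_cancel₀ hκ
  have hchar := H.kap_characteristic hε hHK
  simp only [xj, dot3_add_left, dot3_smul_left]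
  rw [H.dot3_pu_f_ν₁, ← Ft, ← Gt, ← neg_neg (dot3 (h p) (ν₁ p)), ← Nt1]
  linear_combination -rho f ν h ν₁ ε p * hchar -
    (-(Mt h ν p - kap f ν h ν₁ ε p * Ft f h p) * Ft f h p +
      (Lt f ν p - kap f ν h ν₁ ε p * Et f p) * Gt h p) * hρ

theorem dot3_xj_fderiv_Cf (H : AdaptedPureFrontal f ν h ν₁) (hε : ε = 1 ∨ ε = -1)
    (hHK : ∀ p, Hm f ν h ν₁ p ^ 2 - Kg f ν h ν₁ p > 0) (hκ : ∀ p, kap f ν h ν₁ ε p ≠ 0)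
    (p w : ℝ × ℝ) : dot3 (xj f ν h ν₁ ε p) (fderiv ℝ (Cf f ν h ν₁ ε) p w) = 0 := by
  rw [H.fderiv_Cf hHK hκ, fderiv_apply_eq_pu_add_pv f, fderiv_apply_eq_pu_add_pv ν, H.fv_eq,
    H.νv_eq]
  simp only [dot3_add_right, dot3_smul_right, H.dot3_xj_ν]
  linear_combination w.1 * dot3_xj_pu (hκ p) + w.2 * p.2 * H.dot3_xj_h hε (hHK p) (hκ p)

theorem dot3_fderiv_xj_ν (H : AdaptedPureFrontal f ν h ν₁) (hε : ε = 1 ∨ ε = -1)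
    (hHK : ∀ p, Hm f ν h ν₁ p ^ 2 - Kg f ν h ν₁ p > 0) (p : ℝ × ℝ) :
    dot3 (fderiv ℝ (xj f ν h ν₁ ε) p (principalField f ν h ν₁ ε p)) (ν p) =
      p.2 * (kap f ν h ν₁ ε p * dot3 (xj f ν h ν₁ ε p) (xj f ν h ν₁ ε p)) := by
  have hd := dot3_fderiv_add_eq_zero ((H.contDiff_xj hHK ε).differentiable (by simp) p)
    (H.smooth_ν.differentiable (by simp) p) (H.dot3_xj_ν ε) (principalField f ν h ν₁ ε p)
  rw [H.fderiv_ν_principalField hε (hHK p), ← neg_smul, dot3_smul_right] at hd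
  linear_combination hd

end FocalSurface

section Axis

theorem pv_pu_f_axis (H : AdaptedPureFrontal f ν h ν₁) (u : ℝ) : pv (pu f) (u, 0) = 0 := by
  rw [pv_pu_of_pv_eq_snd_smul H.smooth_f H.smooth_h H.fv_eq, zero_smul]

theorem pv_pu_ν_axis (H : AdaptedPureFrontal f ν h ν₁) (u : ℝ) : pv (pu ν) (u, 0) = 0 := by
  rw [pv_pu_of_pv_eq_snd_smul H.smooth_ν H.smooth_ν₁ H.νv_eq, zero_smul]

theorem pu_ν_axis (H : AdaptedPureFrontal f ν h ν₁) (u : ℝ) :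
    pu ν (u, 0) = -(Lt f ν (u, 0) • pu f (u, 0) + Mt h ν (u, 0) • h (u, 0)) := by
  rw [← add_eq_zero_iff_eq_neg]
  refine eq_zero_of_dot3_eq_zero (H.indep (u, 0)) ?_ ?_ ?_ <;>
    simp only [dot3_add_right, dot3_smul_right]
  · rw [H.adapted_fu, H.adapted_fu_h, Lt]
    ring
  · rw [dot3_comm (h _) (pu f _), H.adapted_fu_h, H.adapted_h, Mt]
    ring
  · rw [dot3_comm (ν _) (pu f _), H.orth_fu_ν, dot3_comm (ν _) (h _), H.dot3_h_ν, pu,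
      H.dot3_ν_fderiv_ν]
    ring

theorem pv_Et_axis (H : AdaptedPureFrontal f ν h ν₁) (u : ℝ) : pv (Et f) (u, 0) = 0 := by
  have hf := (contDiff_pu H.smooth_f).differentiable (by simp) (u, 0)
  refine (fderiv_dot3 hf hf (0, 1)).trans ?_
  rw [← pv, H.pv_pu_f_axis, dot3_zero_left, dot3_zero_right, add_zero]

theorem pv_Ft_axis (H : AdaptedPureFrontal f ν h ν₁) (u : ℝ) :
    pv (Ft f h) (u, 0) = dot3 (pu f (u, 0)) (pv h (u, 0)) := by
  refine (fderiv_dot3 ((contDiff_pu H.smooth_f).differentiable (by simp) (u, 0))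
    (H.smooth_h.differentiable (by simp) (u, 0)) (0, 1)).trans ?_
  rw [← pv, ← pv, H.pv_pu_f_axis, dot3_zero_left, zero_add]

theorem pv_Gt (H : AdaptedPureFrontal f ν h ν₁) (p : ℝ × ℝ) :
    pv (Gt h) p = 2 * dot3 (h p) (pv h p) := by
  have hh := H.smooth_h.differentiable (by simp) p
  refine (fderiv_dot3 hh hh (0, 1)).trans ?_
  rw [← pv, dot3_comm (pv h p), two_mul]

theorem pv_Lt_axis (H : AdaptedPureFrontal f ν h ν₁) (u : ℝ) : pv (Lt f ν) (u, 0) = 0 := by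
  have hLt : Lt f ν = fun p => -dot3 (pu f p) (pu ν p) := rfl
  rw [pv, hLt, fderiv_fun_neg, neg_apply,
    fderiv_dot3 ((contDiff_pu H.smooth_f).differentiable (by simp) (u, 0))
      ((contDiff_pu H.smooth_ν).differentiable (by simp) (u, 0)), ← pv, ← pv, H.pv_pu_f_axis,
    H.pv_pu_ν_axis, dot3_zero_left, dot3_zero_right, add_zero, neg_zero]

theorem pv_Mt_axis (H : AdaptedPureFrontal f ν h ν₁) (u : ℝ) : pv (Mt h ν) (u, 0) =
    Lt f ν (u, 0) * pv (Ft f h) (u, 0) + Mt h ν (u, 0) * pv (Gt h) (u, 0) / 2 := by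
  have hMt : Mt h ν = fun p => -dot3 (h p) (pu ν p) := rfl
  have hpv : pv (Mt h ν) (u, 0) = -dot3 (pu ν (u, 0)) (pv h (u, 0)) := by
    rw [pv, hMt, fderiv_fun_neg, neg_apply,
      fderiv_dot3 (H.smooth_h.differentiable (by simp) (u, 0))
        ((contDiff_pu H.smooth_ν).differentiable (by simp) (u, 0)), ← pv, ← pv, H.pv_pu_ν_axis,
      dot3_zero_right, add_zero, dot3_comm]
  rw [hpv, H.pu_ν_axis, neg_add, ← neg_smul, ← neg_smul, dot3_add_left, dot3_smul_left,
    dot3_smul_left, H.pv_Ft_axis, H.pv_Gt]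
  ring

theorem pv_kap_axis (H : AdaptedPureFrontal f ν h ν₁) (hε : ε = 1 ∨ ε = -1)
    (hHK : ∀ p, Hm f ν h ν₁ p ^ 2 - Kg f ν h ν₁ p > 0) (u : ℝ) :
    pv (kap f ν h ν₁ ε) (u, 0) * (kap f ν h ν₁ (-ε) (u, 0) - kap f ν h ν₁ ε (u, 0)) =
      (Lt f ν (u, 0) - kap f ν h ν₁ ε (u, 0)) * rc f ν h ν₁ u / 24 := by
  have hd {g : ℝ × ℝ → ℝ} (hg : ContDiff ℝ ∞ g) : HasFDerivAt g (fderiv ℝ g (u, 0)) (u, 0) :=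
    (hg.differentiable (by simp) (u, 0)).hasFDerivAt
  have hk := hd (H.contDiff_kap hHK ε)
  have hleft := ((hd H.contDiff_Lt).sub (hk.mul (hd H.contDiff_Et))).mul
    ((hd H.contDiff_Nt1).sub (hk.mul (hd H.contDiff_Gt)))
  have hright := ((hd H.contDiff_Mt).sub (hk.mul (hd H.contDiff_Ft))).pow 2
  have hderiv : (Lt f ν (u, 0) - kap f ν h ν₁ ε (u, 0)) *
      (pv (Nt1 h ν₁) (u, 0) - (kap f ν h ν₁ ε (u, 0) * pv (Gt h) (u, 0) +
        pv (kap f ν h ν₁ ε) (u, 0))) +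
      (Nt1 h ν₁ (u, 0) - kap f ν h ν₁ ε (u, 0)) *
        (pv (Lt f ν) (u, 0) - (kap f ν h ν₁ ε (u, 0) * pv (Et f) (u, 0) +
          pv (kap f ν h ν₁ ε) (u, 0))) =
      2 * Mt h ν (u, 0) * (pv (Mt h ν) (u, 0) - kap f ν h ν₁ ε (u, 0) * pv (Ft f h) (u, 0)) := by
    simpa [H.Et_axis, H.Ft_axis, H.Gt_axis, pv] using DFunLike.congr_fun
      (hleft.unique (hright.congr_of_eventuallyEq
        (.of_forall fun p => H.kap_characteristic hε (hHK p)))) (0, 1)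
  rw [H.pv_Et_axis, H.pv_Lt_axis, H.pv_Mt_axis] at hderiv
  rw [H.kap_neg_axis, rc]
  linear_combination -hderiv + pv (Gt h) (u, 0) * H.kap_characteristic_axis hε (hHK (u, 0))

theorem VD_rho_axis (H : AdaptedPureFrontal f ν h ν₁) (hε : ε = 1 ∨ ε = -1)
    (hHK : ∀ p, Hm f ν h ν₁ p ^ 2 - Kg f ν h ν₁ p > 0) (u : ℝ)
    (hκ : kap f ν h ν₁ ε (u, 0) ≠ 0) :
    24 * kap f ν h ν₁ ε (u, 0) ^ 2 * (kap f ν h ν₁ (-ε) (u, 0) - kap f ν h ν₁ ε (u, 0)) *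
        VD f ν h ν₁ ε (rho f ν h ν₁ ε) (u, 0) =
      -(Lt f ν (u, 0) - kap f ν h ν₁ ε (u, 0)) ^ 2 * rc f ν h ν₁ u := by
  have hκ₂ : kap f ν h ν₁ ε (u, 0) ^ 2 * (kap f ν h ν₁ ε (u, 0) ^ 2)⁻¹ = 1 :=
    mul_inv_cancel₀ (pow_ne_zero 2 hκ)
  have hVD : VD f ν h ν₁ ε (kap f ν h ν₁ ε) (u, 0) =
      (Lt f ν (u, 0) - kap f ν h ν₁ ε (u, 0)) * pv (kap f ν h ν₁ ε) (u, 0) := by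
    simp [VD, V1c, V2c, H.Et_axis]
  rw [H.VD_rho hHK hκ, hVD]
  linear_combination -24 * (kap f ν h ν₁ (-ε) (u, 0) - kap f ν h ν₁ ε (u, 0)) *
      (Lt f ν (u, 0) - kap f ν h ν₁ ε (u, 0)) * pv (kap f ν h ν₁ ε) (u, 0) * hκ₂ -
    24 * (Lt f ν (u, 0) - kap f ν h ν₁ ε (u, 0)) * H.pv_kap_axis hε hHK u

/-- At a ridge point `VD rho` and `rc` both vanish, so differentiating `VD_rho_axis` along the
axis only differentiates these two factors. -/
theorem pu_VD_rho_ne_zero_iff (H : AdaptedPureFrontal f ν h ν₁) (hε : ε = 1 ∨ ε = -1)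
    (hHK : ∀ p, Hm f ν h ν₁ p ^ 2 - Kg f ν h ν₁ p > 0) (hκ : ∀ p, kap f ν h ν₁ ε p ≠ 0) {u : ℝ}
    (hkt : kt h ν u ≠ 0) (hridge : VD f ν h ν₁ ε (kap f ν h ν₁ ε) (u, 0) = 0) :
    pu (VD f ν h ν₁ ε (rho f ν h ν₁ ε)) (u, 0) ≠ 0 ↔ deriv (rc f ν h ν₁) u ≠ 0 := by
  have hcont {g : ℝ × ℝ → ℝ} (hg : ContDiff ℝ ∞ g) : ContinuousAt (fun t : ℝ => g (t, 0)) u :=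
    (hasDerivAt_axis (hg.differentiable (by simp) (u, 0))).continuousAt
  have hk := hcont (H.contDiff_kap hHK ε)
  have hcoeff : 24 * kap f ν h ν₁ ε (u, 0) ^ 2 *
      (kap f ν h ν₁ (-ε) (u, 0) - kap f ν h ν₁ ε (u, 0)) ≠ 0 :=
    mul_ne_zero (mul_ne_zero (by norm_num) (pow_ne_zero 2 (hκ _)))
      (kap_neg_sub_kap_ne_zero hε (hHK _))
  have hcoeff' : -(Lt f ν (u, 0) - kap f ν h ν₁ ε (u, 0)) ^ 2 ≠ 0 :=
    neg_ne_zero.2 (pow_ne_zero 2 (H.Lt_sub_kap_ne_zero hε (hHK _) hkt))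
  have hρ : VD f ν h ν₁ ε (rho f ν h ν₁ ε) (u, 0) = 0 := by
    rw [H.VD_rho hHK (hκ _), hridge, mul_zero]
  have hrc : rc f ν h ν₁ u = 0 := by
    have haxis := H.VD_rho_axis hε hHK u (hκ _)
    rw [hρ, mul_zero] at haxis
    exact (mul_eq_zero.1 haxis.symm).resolve_left hcoeff'
  have hleft := hasDerivAt_mul_of_eq_zero
    ((continuousAt_const (y := (24 : ℝ))).mul (hk.pow 2) |>.mul
      ((hcont (H.contDiff_kap hHK (-ε))).sub hk))
    (hasDerivAt_axis ((H.contDiff_VD hHK ε (H.contDiff_rho hHK hκ)).differentiable (by simp)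
      (u, 0))) hρ
  have hright := hasDerivAt_mul_of_eq_zero (((hcont H.contDiff_Lt).sub hk).pow 2).neg
    (H.differentiable_rc u).hasDerivAt hrc
  have hderiv := hleft.unique (hright.congr_of_eventuallyEq
    (.of_forall fun t => H.VD_rho_axis hε hHK t (hκ _)))
  exact (mul_ne_zero_iff_left hcoeff).symm.trans
    ((iff_of_eq (congrArg (· ≠ 0) hderiv)).trans (mul_ne_zero_iff_left hcoeff'))

end Axis

section CuspidalCrossCap

theorem det3_pu_Cf_axis (H : AdaptedPureFrontal f ν h ν₁)
    (hHK : ∀ p, Hm f ν h ν₁ p ^ 2 - Kg f ν h ν₁ p > 0) (hκ : ∀ p, kap f ν h ν₁ ε p ≠ 0) (u : ℝ) :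
    det3 (pu (Cf f ν h ν₁ ε) (u, 0)) (ν (u, 0)) (xj f ν h ν₁ ε (u, 0)) =
      rho f ν h ν₁ ε (u, 0) * ((Lt f ν (u, 0) - kap f ν h ν₁ ε (u, 0)) ^ 2 +
        Mt h ν (u, 0) ^ 2) * det3 (pu f (u, 0)) (h (u, 0)) (ν (u, 0)) := by
  have hρ : rho f ν h ν₁ ε (u, 0) * kap f ν h ν₁ ε (u, 0) = 1 := inv_mul_cancel₀ (hκ _)
  have hCu : pu (Cf f ν h ν₁ ε) (u, 0) =
      -(rho f ν h ν₁ ε (u, 0) • ((Lt f ν (u, 0) - kap f ν h ν₁ ε (u, 0)) • pu f (u, 0) +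
        Mt h ν (u, 0) • h (u, 0))) + pu (rho f ν h ν₁ ε) (u, 0) • ν (u, 0) := by
    rw [pu, H.fderiv_Cf hHK hκ, ← pu, ← pu, ← pu, H.pu_ν_axis]
    linear_combination (norm := module) -hρ • pu f (u, 0)
  have hx : xj f ν h ν₁ ε (u, 0) =
      (Lt f ν (u, 0) - kap f ν h ν₁ ε (u, 0)) • h (u, 0) - Mt h ν (u, 0) • pu f (u, 0) := by
    rw [xj, H.Et_axis, H.Ft_axis, mul_zero, mul_one, sub_zero, neg_smul, neg_add_eq_sub]
  rw [hCu, hx]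
  simp only [det3_eq, Pi.add_apply, Pi.sub_apply, Pi.neg_apply, Pi.smul_apply, smul_eq_mul]
  ring

theorem det3_pu_Cf_axis_ne_zero (H : AdaptedPureFrontal f ν h ν₁)
    (hHK : ∀ p, Hm f ν h ν₁ p ^ 2 - Kg f ν h ν₁ p > 0) (hκ : ∀ p, kap f ν h ν₁ ε p ≠ 0) {u : ℝ}
    (hkt : kt h ν u ≠ 0) :
    det3 (pu (Cf f ν h ν₁ ε) (u, 0)) (ν (u, 0)) (xj f ν h ν₁ ε (u, 0)) ≠ 0 := by
  rw [H.det3_pu_Cf_axis hHK hκ]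
  exact mul_ne_zero (mul_ne_zero (inv_ne_zero (hκ _))
      (add_pos_of_nonneg_of_pos (sq_nonneg _) (pow_two_pos_of_ne_zero hkt)).ne')
    ((det3_ne_zero_iff _ _ _).2 (H.indep _))

theorem isNullFrame_Cf (H : AdaptedPureFrontal f ν h ν₁) (hε : ε = 1 ∨ ε = -1)
    (hHK : ∀ p, Hm f ν h ν₁ p ^ 2 - Kg f ν h ν₁ p > 0) (hκ : ∀ p, kap f ν h ν₁ ε p ≠ 0)
    (hkt : kt h ν 0 ≠ 0) (hridge : VD f ν h ν₁ ε (kap f ν h ν₁ ε) 0 = 0)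
    (hridge1 : VD f ν h ν₁ ε (VD f ν h ν₁ ε (kap f ν h ν₁ ε)) 0 ≠ 0) :
    IsNullFrame (Cf f ν h ν₁ ε) ν (VD f ν h ν₁ ε (rho f ν h ν₁ ε)) (principalField f ν h ν₁ ε)
      (xj f ν h ν₁ ε) fun p => kap f ν h ν₁ ε p * dot3 (xj f ν h ν₁ ε p) (xj f ν h ν₁ ε p) where
  contDiff_map := H.contDiff_Cf hHK hκ
  contDiff_direction := H.smooth_ν
  contDiff_factor := H.contDiff_VD hHK ε (H.contDiff_rho hHK hκ)
  contDiff_field := H.contDiff_principalField hHK ε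
  fderiv_apply := H.fderiv_Cf_principalField hε hHK hκ
  field_fst := by simp [principalField, V1c]
  field_snd := by
    rw [principalField, V2c, ← Prod.mk_zero_zero, H.Et_axis, mul_one]
    exact H.Lt_sub_kap_ne_zero hε (hHK _) hkt
  factor_zero := by rw [H.VD_rho hHK (hκ 0), hridge, mul_zero]
  pv_factor := by
    rw [H.pv_VD_rho hHK hκ hridge]
    rw [VD_eq_fderiv, fderiv_apply_of_fst_eq_zero _ _ (by simp [principalField, V1c])] at hridge1
    exact mul_ne_zero (neg_ne_zero.2 (inv_ne_zero (pow_ne_zero 2 (hκ 0))))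
      (right_ne_zero_of_smul hridge1)
  contDiff_normal := H.contDiff_xj hHK ε
  continuous_coeff := (H.contDiff_kap hHK ε).continuous.mul
    (contDiff_dot3 (H.contDiff_xj hHK ε) (H.contDiff_xj hHK ε)).continuous
  dot3_normal_fderiv := H.dot3_xj_fderiv_Cf hε hHK hκ
  dot3_normal_direction := H.dot3_xj_ν ε
  dot3_fderiv_normal := H.dot3_fderiv_xj_ν hε hHK
  det3_ne_zero := H.det3_pu_Cf_axis_ne_zero hHK hκ hkt
  coeff_ne_zero := mul_ne_zero (hκ 0) fun hx => H.det3_pu_Cf_axis_ne_zero hHK hκ hkt <| by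
    rw [Prod.mk_zero_zero, (dot3_self_eq_zero _).1 hx]
    simp [det3_eq]

theorem aequivAt_Cf_cuspidalGerm_fst_iff (H : AdaptedPureFrontal f ν h ν₁)
    (hε : ε = 1 ∨ ε = -1) (hHK : ∀ p, Hm f ν h ν₁ p ^ 2 - Kg f ν h ν₁ p > 0)
    (hκ : ∀ p, kap f ν h ν₁ ε p ≠ 0) (hkt : kt h ν 0 ≠ 0)
    (hridge : VD f ν h ν₁ ε (kap f ν h ν₁ ε) 0 = 0)
    (hridge1 : VD f ν h ν₁ ε (VD f ν h ν₁ ε (kap f ν h ν₁ ε)) 0 ≠ 0) :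
    AEquivAt (Cf f ν h ν₁ ε) 0 (cuspidalGerm Prod.fst) 0 ↔ deriv (rc f ν h ν₁) 0 ≠ 0 :=
  (H.isNullFrame_Cf hε hHK hκ hkt hridge hridge1).aequivAt_cuspidalGerm_fst_iff.trans
    (H.pu_VD_rho_ne_zero_iff hε hHK hκ hkt hridge)

end CuspidalCrossCap

section AxisDerivatives

theorem deriv_invariants_eq (H : AdaptedPureFrontal f ν h ν₁) (hε : ε = 1 ∨ ε = -1)
    (hHK : ∀ p, Hm f ν h ν₁ p ^ 2 - Kg f ν h ν₁ p > 0) (u : ℝ) :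
    kt h ν u ^ 2 * deriv (kν f ν) u +
        2 * kt h ν u * deriv (kt h ν) u * (kap f ν h ν₁ ε (u, 0) - kν f ν u) +
        deriv (rb h ν₁) u / 3 * (kap f ν h ν₁ ε (u, 0) - kν f ν u) ^ 2 =
      pu (kap f ν h ν₁ ε) (u, 0) * ((kap f ν h ν₁ (-ε) (u, 0) - kap f ν h ν₁ ε (u, 0)) *
        (kν f ν u - kap f ν h ν₁ ε (u, 0))) := by
  have hd {g : ℝ × ℝ → ℝ} (hg : ContDiff ℝ ∞ g) :
      HasDerivAt (fun t : ℝ => g (t, 0)) (pu g (u, 0)) u :=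
    hasDerivAt_axis (hg.differentiable (by simp) (u, 0))
  have hL : HasDerivAt (kν f ν) _ u := hd H.contDiff_Lt
  have hM : HasDerivAt (kt h ν) _ u := hd H.contDiff_Mt
  have hN := hd H.contDiff_Nt1
  have hb : HasDerivAt (rb h ν₁) _ u := hN.const_mul 3
  have hk := hd (H.contDiff_kap hHK ε)
  have hderiv := ((hL.sub hk).mul (hN.sub hk)).unique ((hM.pow 2).congr_of_eventuallyEq
    (.of_forall fun t => H.kap_characteristic_axis hε (hHK (t, 0))))
  have hchar := H.kap_characteristic_axis hε (hHK (u, 0))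
  rw [hL.deriv, hM.deriv, hb.deriv, H.kap_neg_axis]
  simp only [kν, kt, Pi.sub_apply, Nat.cast_ofNat, Nat.add_one_sub_one, pow_one] at hderiv ⊢
  linear_combination (Lt f ν (u, 0) - kap f ν h ν₁ ε (u, 0)) * hderiv -
    pu (Lt f ν) (u, 0) * hchar

/-- By `deriv_invariants_eq`, equality would force `κ_t² + (κ - κ_ν)² + (κ_u / κ)² = 0`. -/
theorem pu_rho_mul_ne (H : AdaptedPureFrontal f ν h ν₁) (hε : ε = 1 ∨ ε = -1)
    (hHK : ∀ p, Hm f ν h ν₁ p ^ 2 - Kg f ν h ν₁ p > 0) {u : ℝ} (hκ : kap f ν h ν₁ ε (u, 0) ≠ 0)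
    (hkt : kt h ν u ≠ 0) :
    pu (rho f ν h ν₁ ε) (u, 0) * (kt h ν u ^ 2 * deriv (kν f ν) u +
        2 * kt h ν u * deriv (kt h ν) u * (kap f ν h ν₁ ε (u, 0) - kν f ν u) +
        deriv (rb h ν₁) u / 3 * (kap f ν h ν₁ ε (u, 0) - kν f ν u) ^ 2) ≠
      (kt h ν u ^ 2 + (kap f ν h ν₁ ε (u, 0) - kν f ν u) ^ 2) *
        (kap f ν h ν₁ (-ε) (u, 0) - kap f ν h ν₁ ε (u, 0)) *
        (kν f ν u - kap f ν h ν₁ ε (u, 0)) := by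
  have hfactor := mul_ne_zero (kap_neg_sub_kap_ne_zero hε (hHK (u, 0)))
    (H.Lt_sub_kap_ne_zero hε (hHK (u, 0)) hkt)
  have hpos : 0 < kt h ν u ^ 2 + (kap f ν h ν₁ ε (u, 0) - kν f ν u) ^ 2 +
      ((kap f ν h ν₁ ε (u, 0))⁻¹ * pu (kap f ν h ν₁ ε) (u, 0)) ^ 2 := by
    positivity
  have hρ : pu (rho f ν h ν₁ ε) (u, 0) =
      -(kap f ν h ν₁ ε (u, 0) ^ 2)⁻¹ * pu (kap f ν h ν₁ ε) (u, 0) := H.fderiv_rho hHK hκ (1, 0)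
  rw [H.deriv_invariants_eq hε hHK, hρ]
  refine fun heq => mul_ne_zero hpos.ne' hfactor ?_
  rw [mul_pow, inv_pow, ← kν]
  linear_combination -heq

end AxisDerivatives

end AdaptedPureFrontal

/-- criterion for the focal surface C_j to have a cuspidal cross cap at
a first order V_j-ridge point, in terms of the invariants of the initial frontal. -/
theorem stmt_16 (f ν h ν₁ : ℝ × ℝ → R3) (H : AdaptedPureFrontal f ν h ν₁)
    (ε : ℝ) (hε : ε = 1 ∨ ε = -1)
    (hHK : ∀ p : ℝ × ℝ, Hm f ν h ν₁ p ^ 2 - Kg f ν h ν₁ p > 0)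
    (hκ : ∀ p : ℝ × ℝ, kap f ν h ν₁ ε p ≠ 0)
    (hkt : kt h ν 0 ≠ 0)
    (hridge : VD f ν h ν₁ ε (kap f ν h ν₁ ε) 0 = 0)
    (hridge1 : VD f ν h ν₁ ε (VD f ν h ν₁ ε (kap f ν h ν₁ ε)) 0 ≠ 0) :
    AEquivAt (Cf f ν h ν₁ ε) 0 (fun x : ℝ × ℝ => ![x.1, x.2 ^ 2, x.1 * x.2 ^ 3]) 0 ↔
      (deriv (rc f ν h ν₁) 0 ≠ 0 ∧
        pu (rho f ν h ν₁ ε) 0 *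
            ((kt h ν 0) ^ 2 * deriv (kν f ν) 0 +
              2 * kt h ν 0 * deriv (kt h ν) 0 * (kap f ν h ν₁ ε 0 - kν f ν 0) +
              (deriv (rb h ν₁) 0 / 3) * (kap f ν h ν₁ ε 0 - kν f ν 0) ^ 2) ≠
          ((kt h ν 0) ^ 2 + (kap f ν h ν₁ ε 0 - kν f ν 0) ^ 2) *
            (kap f ν h ν₁ (-ε) 0 - kap f ν h ν₁ ε 0) *
            (kν f ν 0 - kap f ν h ν₁ ε 0)) := by
  have hrc := H.aequivAt_Cf_cuspidalGerm_fst_iff hε hHK hκ hkt hridge hridge1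
  have hρ := H.pu_rho_mul_ne hε hHK (hκ (0, 0)) hkt
  exact hrc.trans ⟨fun hr => ⟨hr, hρ⟩, And.left⟩
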